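/- Let 0 < θ < 1, let 1 ≤ q₀, q₁ < ∞ be constants, let p₀ be a globally log-Hölder continuous exponent with 1 ≤ p₀⁻ ≤ p₀⁺ < ∞, and let α₀, α₁ : ℝ^n → ℝ be locally log-Hölder continuous. Define 1/p(·) := (1−θ)/p₀(·), 1/q := (1−θ)/q₀ + θ/q₁, and α(·) := (1−θ)α₀(·) + θα₁(·). Then the Calderón product (f^{α₀(·)}_{p₀(·),q₀})^{1−θ} · (f^{α₁(·)}_{∞,q₁})^{θ} equals f^{α(·)}_{p(·),q} with equivalent norms. -/

import Mathlib

open MeasureTheory ENNReal Real Set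

noncomputable section

/-- Euclidean space ℝ^n. -/
abbrev En (n : ℕ) := EuclideanSpace ℝ (Fin n)

/-- `g` is locally log-Hölder continuous with constant `c`. -/
def LocLogHolder {n : ℕ} (c : ℝ) (g : En n → ℝ) : Prop :=
  0 < c ∧ ∀ x y : En n, |g x - g y| ≤ c / Real.log (Real.exp 1 + 1 / ‖x - y‖)

/-- `g` is globally log-Hölder continuous with local constant `c`. -/
def GlobLogHolder {n : ℕ} (c : ℝ) (g : En n → ℝ) : Prop :=
  LocLogHolder c g ∧
    ∃ (gi cd : ℝ), 0 < cd ∧ ∀ x : En n, |g x - gi| ≤ cd / Real.log (Real.exp 1 + ‖x‖)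

/-- The kernel η_{v,h}(x) = 2^{nv} (1 + 2^v |x|)^{-h}. -/
def eta (n : ℕ) (v : ℕ) (h : ℝ) (x : En n) : ℝ :=
  (2 : ℝ) ^ (n * v) * (1 + (2 : ℝ) ^ v * ‖x‖) ^ (-h)

/-- The dyadic cube Q_{v,m}. -/
def dyadicCube (n : ℕ) (v : ℤ) (m : Fin n → ℤ) : Set (En n) :=
  {x | ∀ i, (m i : ℝ) ≤ (2 : ℝ) ^ v * x i ∧ (2 : ℝ) ^ v * x i < m i + 1}

/-- Luxemburg (quasi-)norm of an ℝ≥0∞-valued function with variable exponent `p`. -/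
def luxNorm {n : ℕ} (p : En n → ℝ) (F : En n → ℝ≥0∞) : ℝ≥0∞ :=
  sInf {c : ℝ≥0∞ | 0 < c ∧ ∫⁻ x, (F x / c) ^ p x ≤ 1}

/-- The mixed Lebesgue-sequence space norm ‖(F_v)_v‖_{L^{p(·)}(ℓ_{q(·)})}. -/
def mixedNorm {n : ℕ} (p q : En n → ℝ) (F : ℕ → En n → ℝ≥0∞) : ℝ≥0∞ :=
  luxNorm p fun x => (∑' v : ℕ, F v x ^ q x) ^ (1 / q x)

/-- The sequence space norm ‖λ‖_{f^{α(·)}_{p(·),q(·)}}. -/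
def seqNorm {n : ℕ} (α p q : En n → ℝ) (lam : ℕ → (Fin n → ℤ) → ℂ) : ℝ≥0∞ :=
  mixedNorm p q fun v x =>
    ∑' m : Fin n → ℤ,
      ENNReal.ofReal ((2 : ℝ) ^ ((v : ℝ) * (α x + n / 2)) * ‖lam v m‖) *
        (dyadicCube n (v : ℤ) m).indicator (fun _ => (1 : ℝ≥0∞)) x

/-- The sequence space norm ‖λ‖_{f^{α(·)}_{∞,q}}. -/
def seqNormInf {n : ℕ} (α : En n → ℝ) (q : ℝ) (lam : ℕ → (Fin n → ℤ) → ℂ) : ℝ≥0∞ :=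
  ⨆ (vQ : ℤ) (mQ : Fin n → ℤ),
    volume (dyadicCube n vQ mQ) ^ (-(1 / q)) *
      (∑' v : ℕ, if vQ ≤ (v : ℤ) then
          ∫⁻ x in dyadicCube n vQ mQ,
            ∑' m : Fin n → ℤ,
              ENNReal.ofReal ((2 : ℝ) ^ ((v : ℝ) * (α x + n / 2) * q) * ‖lam v m‖ ^ q) *
                (dyadicCube n (v : ℤ) m).indicator (fun _ => (1 : ℝ≥0∞)) x
        else 0) ^ (1 / q)

/-- The Calderón product (quasi-)norm associated to two sequence space norms. -/
def calderonNorm {n : ℕ} (N0 N1 : (ℕ → (Fin n → ℤ) → ℂ) → ℝ≥0∞) (θ : ℝ)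
    (lam : ℕ → (Fin n → ℤ) → ℂ) : ℝ≥0∞ :=
  sInf {M : ℝ≥0∞ | ∃ μ ν : ℕ → (Fin n → ℤ) → ℂ, N0 μ ≤ 1 ∧ N1 ν ≤ 1 ∧
    ∀ v m, ENNReal.ofReal ‖lam v m‖ ≤
      M * ENNReal.ofReal ‖μ v m‖ ^ (1 - θ) * ENNReal.ofReal ‖ν v m‖ ^ θ}

/-!
Put `r = p / q` and let `κ` satisfy `κ / q = θ / q₁`, so that `(1 - κ) / q = (1 - θ) / q₀` and
`(1 - κ) r = p₀ / q₀`. The weights `2 ^ (v α(x))` vary boundedly over a dyadic cube of level `v`,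
because `α` is log-Hölder continuous. With `t`, `a`, `d` the weighted `q`-th, `q₀`-th and `q₁`-th
powers of the moduli of `λ`, `μ`, `ν`, the claim therefore concerns factorizations
`t ≤ M a ^ (1 - κ) d ^ κ` of coefficients on dyadic cubes, the variable Luxemburg norms of the sums
of the step functions of `t` and `a`, and a Carleson condition on `d`.

Both estimates rest on one principle: the Luxemburg norm of a sum of step functions is controlled
by that of the sum in which each level is restricted to a set filling half of every cube of that
level. To see it, telescope the power `S ^ s` of the partial sums into increments
`b_v S_v ^ (s - 1)`, pass to the half-dense sets cube by cube, and absorb. The cube by cube step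
needs `S_v ^ (s - 1)` to vary boundedly on cubes of level `v`, in spite of the variable exponent;
this follows from log-Hölder continuity once a polynomially decaying weight is added to the
coefficients of level zero.

For the lower estimate, restrict to the sets on which the tails of the sum of `d` are at most twice
its Carleson norm and apply Hölder's inequality to the sum over the levels. For the upper estimate,
let `τ` be the mean over a cube of the reciprocal of the sum of `t`. Then `d = t τ` satisfies the
Carleson condition trivially, and `a = t τ ^ (-κ / (1 - κ))` is controlled on the sets on which
that reciprocal is at most `2 τ`.
-/

open scoped NNReal

section

variable {n : ℕ}

/-! ### Dyadic cubes -/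

/-- The index `m` of the dyadic cube `Q_{v,m}` of level `v` that contains `x`. -/
def dyadicIndex (v : ℤ) (x : En n) : Fin n → ℤ := fun i ↦ ⌊(2 : ℝ) ^ v * x i⌋

/-- The corner of the dyadic cube `Q_{v,m}` with the least coordinates, used as its base point. -/
def dyadicCorner (v : ℤ) (m : Fin n → ℤ) : En n := WithLp.toLp 2 fun i ↦ (m i : ℝ) * 2 ^ (-v)

lemma mem_dyadicCube_iff {v : ℤ} {m : Fin n → ℤ} {x : En n} :
    x ∈ dyadicCube n v m ↔ dyadicIndex v x = m := by
  simp only [dyadicCube, dyadicIndex, mem_ofPred_eq, funext_iff, Int.floor_eq_iff]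

lemma measurable_dyadicIndex (v : ℤ) : Measurable (dyadicIndex v : En n → Fin n → ℤ) :=
  measurable_pi_lambda _ fun i ↦ Int.measurable_floor.comp (by fun_prop)

lemma measurableSet_dyadicCube (v : ℤ) (m : Fin n → ℤ) : MeasurableSet (dyadicCube n v m) := by
  have hpre : dyadicCube n v m = dyadicIndex v ⁻¹' {m} := ext fun x ↦ mem_dyadicCube_iff
  exact hpre ▸ measurable_dyadicIndex v (measurableSet_singleton m)

lemma dyadicIndex_eq_of_le {u v : ℤ} (huv : u ≤ v) {x y : En n}
    (hxy : dyadicIndex v x = dyadicIndex v y) : dyadicIndex u x = dyadicIndex u y := by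
  obtain ⟨k, rfl⟩ := Int.exists_add_of_le huv
  have hdiv (z : En n) (i) : dyadicIndex u z i = dyadicIndex (u + k) z i / (2 ^ k : ℕ) := by
    simp only [dyadicIndex]
    rw [← Int.floor_div_natCast, zpow_add₀ two_ne_zero, zpow_natCast]
    congr 1
    push_cast
    field_simp
  funext i
  rw [hdiv, hdiv, hxy]

lemma dyadicCube_subset_of_le {u v : ℤ} (huv : u ≤ v) {k m : Fin n → ℤ} {y : En n}
    (hyu : y ∈ dyadicCube n u k) (hyv : y ∈ dyadicCube n v m) :
    dyadicCube n v m ⊆ dyadicCube n u k := by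
  intro x hx
  rw [mem_dyadicCube_iff] at *
  exact (dyadicIndex_eq_of_le huv (hx.trans hyv.symm)).trans hyu

lemma volume_dyadicCube (v : ℤ) (m : Fin n → ℤ) :
    volume (dyadicCube n v m) = ENNReal.ofReal ((2 ^ (-v)) ^ n) := by
  have h2 : (0 : ℝ) < 2 ^ v := by positivity
  have hbox : dyadicCube n v m = (WithLp.ofLp : En n → Fin n → ℝ) ⁻¹'
      (univ.pi fun i ↦ Ico (m i * 2 ^ (-v) : ℝ) ((m i + 1) * 2 ^ (-v))) := by
    ext x
    simp only [dyadicCube, mem_ofPred_eq, mem_preimage, mem_pi, mem_univ, true_implies, mem_Ico,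
      zpow_neg]
    refine forall_congr' fun i ↦ ?_
    rw [← div_eq_mul_inv, ← div_eq_mul_inv, div_le_iff₀ h2, lt_div_iff₀ h2, mul_comm]
  have hside (i) : (m i + 1) * 2 ^ (-v) - m i * 2 ^ (-v) = (2 : ℝ) ^ (-v) := by ring
  rw [hbox, (PiLp.volume_preserving_ofLp (Fin n)).measure_preimage
    (MeasurableSet.univ_pi fun i ↦ measurableSet_Ico).nullMeasurableSet, Real.volume_pi_Ico]
  simp only [hside]
  rw [Finset.prod_const, Finset.card_fin, ENNReal.ofReal_pow (by positivity)]

lemma volume_dyadicCube_ne_zero (v : ℤ) (m : Fin n → ℤ) : volume (dyadicCube n v m) ≠ 0 := by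
  rw [volume_dyadicCube, ← pos_iff_ne_zero, ENNReal.ofReal_pos]
  positivity

lemma volume_dyadicCube_ne_top (v : ℤ) (m : Fin n → ℤ) : volume (dyadicCube n v m) ≠ ∞ := by
  rw [volume_dyadicCube]
  exact ENNReal.ofReal_ne_top

lemma dyadicIndex_dyadicCorner (v : ℤ) (m : Fin n → ℤ) :
    dyadicIndex v (dyadicCorner v m) = m := by
  have hcancel (a : ℝ) : (2 : ℝ) ^ v * (a * 2 ^ (-v)) = a := by
    rw [zpow_neg]
    field_simp
  funext i
  simp only [dyadicIndex, dyadicCorner, hcancel, Int.floor_intCast]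

lemma norm_sub_le_of_dyadicIndex_eq {v : ℤ} {x y : En n} (h : dyadicIndex v x = dyadicIndex v y) :
    ‖x - y‖ ≤ (n + 1) * 2 ^ (-v) := by
  have h2 : (0 : ℝ) < 2 ^ v := by positivity
  have hcoord (i) : |x i - y i| ≤ 2 ^ (-v) := by
    have hfloor : |(2 : ℝ) ^ v * x i - 2 ^ v * y i| < 1 :=
      Int.abs_sub_lt_one_of_floor_eq_floor (congrFun h i)
    rw [← mul_sub, abs_mul, abs_of_pos h2] at hfloor
    rw [zpow_neg, ← one_div, le_div_iff₀ h2]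
    linarith
  rw [EuclideanSpace.norm_eq]
  refine Real.sqrt_le_iff.2 ⟨by positivity, ?_⟩
  calc ∑ i, ‖(x - y) i‖ ^ 2 ≤ ∑ _i : Fin n, ((2 : ℝ) ^ (-v)) ^ 2 := by
        simp only [PiLp.sub_apply, Real.norm_eq_abs]
        gcongr
        exact hcoord _
    _ = n * ((2 : ℝ) ^ (-v)) ^ 2 := by simp
    _ ≤ ((n + 1) * 2 ^ (-v)) ^ 2 := by
        rw [mul_pow]
        gcongr
        nlinarith [Nat.cast_nonneg (α := ℝ) n]

lemma tsum_mul_indicator_dyadicCube (v : ℤ) (f : (Fin n → ℤ) → ℝ≥0∞) (x : En n) :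
    ∑' m, f m * (dyadicCube n v m).indicator (fun _ ↦ 1) x = f (dyadicIndex v x) := by
  rw [tsum_eq_single (dyadicIndex v x), indicator_of_mem (mem_dyadicCube_iff.2 rfl), mul_one]
  intro m hm
  rw [indicator_of_notMem fun h ↦ hm (mem_dyadicCube_iff.1 h).symm, mul_zero]

lemma lintegral_eq_tsum_dyadicCube (μ : Measure (En n)) (v : ℤ) (f : En n → ℝ≥0∞) :
    ∫⁻ x, f x ∂μ = ∑' m, ∫⁻ x in dyadicCube n v m, f x ∂μ := by
  have hcover : ⋃ m, dyadicCube n v m = univ :=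
    iUnion_eq_univ_iff.2 fun x ↦ ⟨dyadicIndex v x, mem_dyadicCube_iff.2 rfl⟩
  have hdisj : Pairwise (Function.onFun Disjoint (dyadicCube n v)) := fun a b hab ↦
    disjoint_left.2 fun x hxa hxb ↦
      hab ((mem_dyadicCube_iff.1 hxa).symm.trans (mem_dyadicCube_iff.1 hxb))
  rw [← lintegral_iUnion (measurableSet_dyadicCube v) hdisj, hcover, setLIntegral_univ]

lemma setLIntegral_dyadicCube_le_of_subcubes {u v : ℤ} (huv : u ≤ v) {f g : En n → ℝ≥0∞}
    (h : ∀ m, ∫⁻ x in dyadicCube n v m, f x ≤ ∫⁻ x in dyadicCube n v m, g x) (k : Fin n → ℤ) :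
    ∫⁻ x in dyadicCube n u k, f x ≤ ∫⁻ x in dyadicCube n u k, g x := by
  rw [lintegral_eq_tsum_dyadicCube _ v f, lintegral_eq_tsum_dyadicCube _ v g]
  refine ENNReal.tsum_le_tsum fun m ↦ ?_
  rw [Measure.restrict_restrict (measurableSet_dyadicCube v m)]
  obtain hempty | ⟨y, hyv, hyu⟩ := (dyadicCube n v m ∩ dyadicCube n u k).eq_empty_or_nonempty
  · simp only [hempty, Measure.restrict_empty, lintegral_zero_measure, le_refl]
  · rw [inter_eq_left.2 (dyadicCube_subset_of_le huv hyu hyv)]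
    exact h m

/-! ### Log-Hölder continuity -/

lemma one_le_log_exp_one_add {t : ℝ} (ht : 0 ≤ t) : 1 ≤ Real.log (Real.exp 1 + t) := by
  rw [Real.le_log_iff_exp_le (by positivity)]
  linarith

lemma log_exp_one_add_le_mul {A s t : ℝ} (hs : 0 ≤ s) (ht : 0 ≤ t) (hA : 1 ≤ A)
    (hst : s ≤ A * (1 + t)) :
    Real.log (Real.exp 1 + s) ≤ (1 + Real.log (2 * A)) * Real.log (Real.exp 1 + t) := by
  have hexp : 1 ≤ Real.exp 1 := Real.one_le_exp zero_le_one
  have hL : 1 ≤ Real.log (Real.exp 1 + t) := one_le_log_exp_one_add ht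
  have hlogA : 0 ≤ Real.log (2 * A) := Real.log_nonneg (by linarith)
  calc Real.log (Real.exp 1 + s) ≤ Real.log (2 * A * (Real.exp 1 + t)) := by
        refine Real.log_le_log (by positivity) ?_
        nlinarith
    _ = Real.log (2 * A) + Real.log (Real.exp 1 + t) :=
        Real.log_mul (by positivity) (by positivity)
    _ ≤ _ := by nlinarith

lemma exists_add_one_le_mul_log {a : ℝ} (ha : 1 ≤ a) :
    ∃ K, 0 ≤ K ∧ ∀ (v : ℕ) (d : ℝ), 0 < d → d ≤ a * 2 ^ (-(v : ℤ)) →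
      v + 1 ≤ K * Real.log (Real.exp 1 + 1 / d) := by
  have hl2 : 0 < Real.log 2 := Real.log_pos one_lt_two
  have hla : 0 ≤ Real.log a := Real.log_nonneg ha
  refine ⟨1 + (1 + Real.log a) / Real.log 2, by positivity, fun v d hd hdist ↦ ?_⟩
  set L := Real.log (Real.exp 1 + 1 / d)
  have hL : 1 ≤ L := one_le_log_exp_one_add (by positivity)
  have hpow : (2 : ℝ) ^ v ≤ a * (Real.exp 1 + 1 / d) := by
    rw [zpow_neg, zpow_natCast, ← div_eq_mul_inv, le_div_iff₀ (by positivity), mul_comm,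
      ← le_div_iff₀ hd] at hdist
    rw [mul_add, mul_one_div]
    exact hdist.trans (le_add_of_nonneg_left (by positivity))
  have hlog : v * Real.log 2 ≤ Real.log a + L := by
    have := Real.log_le_log (by positivity) hpow
    rwa [Real.log_pow, Real.log_mul (by positivity) (by positivity)] at this
  have hv : (v : ℝ) ≤ (1 + Real.log a) * L / Real.log 2 := by
    rw [le_div_iff₀ hl2]
    nlinarith
  calc (v + 1 : ℝ) ≤ (1 + Real.log a) * L / Real.log 2 + L := by linarith
    _ = (1 + (1 + Real.log a) / Real.log 2) * L := by ring

namespace LocLogHolder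

variable {c d : ℝ} {g h : En n → ℝ}

lemma const_mul {k : ℝ} (hk : 0 < k) (hg : LocLogHolder c g) :
    LocLogHolder (k * c) fun x ↦ k * g x := by
  refine ⟨mul_pos hk hg.1, fun x y ↦ ?_⟩
  rw [← mul_sub, abs_mul, abs_of_pos hk, mul_div_assoc]
  exact mul_le_mul_of_nonneg_left (hg.2 x y) hk.le

lemma add (hg : LocLogHolder c g) (hh : LocLogHolder d h) :
    LocLogHolder (c + d) fun x ↦ g x + h x := by
  refine ⟨add_pos hg.1 hh.1, fun x y ↦ ?_⟩
  rw [add_sub_add_comm, add_div]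
  exact (abs_add_le _ _).trans (add_le_add (hg.2 x y) (hh.2 x y))

lemma continuous (hg : LocLogHolder c g) : Continuous g := by
  refine continuous_iff_continuousAt.2 fun x ↦ ?_
  rw [continuousAt_iff_punctured_nhds, tendsto_iff_norm_sub_tendsto_zero]
  have hlog : Filter.Tendsto (fun y ↦ Real.log (Real.exp 1 + 1 / ‖y - x‖)) (nhdsWithin x {x}ᶜ)
      Filter.atTop := by
    refine Real.tendsto_log_atTop.comp (Filter.tendsto_atTop_add_const_left _ _ ?_)
    simp only [one_div]
    exact (tendsto_norm_sub_self_nhdsNE x).inv_tendsto_nhdsGT_zero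
  exact squeeze_zero (fun y ↦ norm_nonneg _) (fun y ↦ hg.2 y x) (hlog.const_div_atTop c)

lemma exists_abs_sub_mul_le (hg : LocLogHolder c g) :
    ∃ C, 0 ≤ C ∧ ∀ (v : ℕ) (x y : En n), dyadicIndex v x = dyadicIndex v y →
      |g x - g y| * (v + 1) ≤ C := by
  obtain ⟨hc, hg⟩ := hg
  obtain ⟨K, hK, hlog⟩ := exists_add_one_le_mul_log (a := n + 1) (by simp)
  refine ⟨c * K, by positivity, fun v x y h ↦ ?_⟩
  obtain rfl | hxy := eq_or_ne x y
  · simp only [sub_self, abs_zero, zero_mul]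
    positivity
  have hL : 1 ≤ Real.log (Real.exp 1 + 1 / ‖x - y‖) := one_le_log_exp_one_add (by positivity)
  calc |g x - g y| * (v + 1)
      ≤ c / Real.log (Real.exp 1 + 1 / ‖x - y‖) * (K * Real.log (Real.exp 1 + 1 / ‖x - y‖)) := by
        gcongr
        · exact hg x y
        · exact hlog v _ (norm_pos_iff.2 (sub_ne_zero.2 hxy)) (norm_sub_le_of_dyadicIndex_eq h)
    _ = c * K := by field_simp

end LocLogHolder

namespace GlobLogHolder

variable {c : ℝ} {g : En n → ℝ}

lemma const_mul {k : ℝ} (hk : 0 < k) (hg : GlobLogHolder c g) :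
    GlobLogHolder (k * c) fun x ↦ k * g x := by
  obtain ⟨hloc, gi, cd, hcd, hdecay⟩ := hg
  refine ⟨hloc.const_mul hk, k * gi, k * cd, mul_pos hk hcd, fun x ↦ ?_⟩
  rw [← mul_sub, abs_mul, abs_of_pos hk, mul_div_assoc]
  exact mul_le_mul_of_nonneg_left (hdecay x) hk.le

lemma exists_abs_sub_mul_log_le (hg : GlobLogHolder c g) :
    ∃ C, 0 ≤ C ∧ ∀ x y z : En n, dyadicIndex 0 x = dyadicIndex 0 z →
      dyadicIndex 0 y = dyadicIndex 0 z → |g x - g y| * Real.log (Real.exp 1 + ‖z‖) ≤ C := by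
  obtain ⟨-, gi, cd, hcd, hdecay⟩ := hg
  set K := 1 + Real.log (2 * (n + 1 : ℝ))
  have hK : 0 ≤ K := add_nonneg zero_le_one (Real.log_nonneg (by linarith [n.cast_nonneg (α := ℝ)]))
  have hpoint (x z : En n) (h : dyadicIndex 0 x = dyadicIndex 0 z) :
      |g x - gi| * Real.log (Real.exp 1 + ‖z‖) ≤ cd * K := by
    have hzx : ‖z‖ ≤ (n + 1) * (1 + ‖x‖) := by
      have hdist := norm_sub_le_of_dyadicIndex_eq h.symm
      rw [neg_zero, zpow_zero, mul_one] at hdist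
      nlinarith [norm_le_norm_add_norm_sub' z x, norm_nonneg x, n.cast_nonneg (α := ℝ)]
    have hlog := log_exp_one_add_le_mul (norm_nonneg z) (norm_nonneg x)
      (by linarith [n.cast_nonneg (α := ℝ)]) hzx
    have hx := one_le_log_exp_one_add (norm_nonneg x)
    have hz := one_le_log_exp_one_add (norm_nonneg z)
    calc |g x - gi| * Real.log (Real.exp 1 + ‖z‖)
        ≤ cd / Real.log (Real.exp 1 + ‖x‖) * (K * Real.log (Real.exp 1 + ‖x‖)) :=
          mul_le_mul (hdecay x) hlog (by linarith) (by positivity)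
      _ = cd * K := by field_simp
  refine ⟨2 * (cd * K), by positivity, fun x y z hx hy ↦ ?_⟩
  have htri : |g x - g y| ≤ |g x - gi| + |g y - gi| := by
    simpa only [abs_sub_comm gi] using abs_sub_le (g x) gi (g y)
  nlinarith [hpoint x z hx, hpoint y z hy, one_le_log_exp_one_add (norm_nonneg z)]

end GlobLogHolder

/-! ### The Luxemburg norm -/

section luxNorm

variable {p : En n → ℝ} {F G : En n → ℝ≥0∞}

lemma luxNorm_le_mul_luxNorm (hp : ∀ x, 0 < p x) {k : ℝ≥0∞} (hk : k ≠ ∞)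
    (hFG : ∀ x, F x ≤ k * G x) : luxNorm p F ≤ k * luxNorm p G := by
  obtain rfl | hk0 := eq_or_ne k 0
  · refine le_of_forall_gt_imp_ge_of_dense fun c hc ↦ sInf_le ⟨by simpa using hc, ?_⟩
    have hF (x) : F x = 0 := by simpa using hFG x
    simp only [hF, ENNReal.zero_div, ENNReal.zero_rpow_of_pos (hp _), lintegral_zero, zero_le]
  rw [mul_comm, ← ENNReal.div_le_iff_le_mul (.inl hk0) (.inl hk)]
  refine le_sInf fun c ⟨hc, hint⟩ ↦ ?_
  rw [ENNReal.div_le_iff_le_mul (.inl hk0) (.inl hk)]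
  refine sInf_le ⟨ENNReal.mul_pos hc.ne' hk0, le_trans (lintegral_mono fun x ↦ ?_) hint⟩
  refine ENNReal.rpow_le_rpow ?_ (hp x).le
  calc F x / (c * k) ≤ k * G x / (k * c) := by
        rw [mul_comm c]
        exact ENNReal.div_le_div_right (hFG x) _
    _ = G x / c := ENNReal.mul_div_mul_left _ _ hk0 hk

lemma luxNorm_rpow {r : ℝ} (hr : 0 < r) (p : En n → ℝ) (F : En n → ℝ≥0∞) :
    luxNorm p (fun x ↦ F x ^ r) = luxNorm (fun x ↦ r * p x) F ^ r := by
  have hset : {c : ℝ≥0∞ | 0 < c ∧ ∫⁻ x, (F x / c) ^ (r * p x) ≤ 1} =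
      ENNReal.orderIsoRpow r hr ⁻¹' {c | 0 < c ∧ ∫⁻ x, (F x ^ r / c) ^ p x ≤ 1} := by
    ext c
    simp only [mem_preimage, mem_ofPred_eq, ENNReal.orderIsoRpow_apply, ENNReal.rpow_mul,
      ENNReal.div_rpow_of_nonneg _ _ hr.le, pos_iff_ne_zero, ne_eq,
      ENNReal.rpow_eq_zero_iff_of_pos hr]
  rw [luxNorm, luxNorm, hset, ← ENNReal.orderIsoRpow_apply r hr,
    OrderIso.map_sInf_eq_sInf_symm_preimage, OrderIso.symm_preimage_preimage]

lemma lintegral_div_rpow_le_one_of_luxNorm_lt (hp : ∀ x, 0 ≤ p x) {c : ℝ≥0∞}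
    (hc : luxNorm p G < c) : ∫⁻ x, (G x / c) ^ p x ≤ 1 := by
  obtain ⟨d, ⟨-, hint⟩, hdc⟩ := sInf_lt_iff.1 hc
  refine le_trans (lintegral_mono fun x ↦ ?_) hint
  exact ENNReal.rpow_le_rpow (ENNReal.div_le_div_left hdc.le _) (hp x)

lemma luxNorm_le_mul_luxNorm_of_modular {pm : ℝ} (hpm : 0 < pm) (hp : ∀ x, pm ≤ p x) {C : ℝ≥0∞}
    (hC : 1 ≤ C) (hCt : C ≠ ∞)
    (hmod : ∀ c ≠ 0, c ≠ ∞ → ∫⁻ x, (G x / c) ^ p x ≤ 1 → ∫⁻ x, (F x / c) ^ p x ≤ C) :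
    luxNorm p F ≤ C ^ (1 / pm) * luxNorm p G := by
  set K := C ^ (1 / pm)
  have hK : K ≠ 0 := (zero_lt_one.trans_le (ENNReal.one_le_rpow hC (by positivity))).ne'
  have hKt : K ≠ ∞ := ENNReal.rpow_ne_top_of_nonneg (by positivity) hCt
  rw [mul_comm, ← ENNReal.div_le_iff_le_mul (.inl hK) (.inl hKt)]
  refine le_of_forall_gt_imp_ge_of_dense fun c hc ↦ ?_
  rw [ENNReal.div_le_iff_le_mul (.inl hK) (.inl hKt), mul_comm]
  obtain rfl | hct := eq_or_ne c ∞
  · simp only [ENNReal.mul_top hK, le_top]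
  have hc0 : c ≠ 0 := (zero_le.trans_lt hc).ne'
  refine sInf_le ⟨ENNReal.mul_pos hK hc0, ?_⟩
  have hCK (x) : C ≤ K ^ p x := by
    rw [← ENNReal.rpow_mul, one_div_mul_eq_div]
    exact ENNReal.le_rpow_self_of_one_le hC ((one_le_div hpm).2 (hp x))
  calc ∫⁻ x, (F x / (K * c)) ^ p x = ∫⁻ x, (F x / c) ^ p x / K ^ p x := by
        refine lintegral_congr fun x ↦ ?_
        rw [← ENNReal.div_rpow_of_nonneg _ _ (hpm.le.trans (hp x)), mul_comm,
          ENNReal.div_eq_inv_mul, ENNReal.mul_inv (.inl hc0) (.inl hct), div_eq_mul_inv,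
          div_eq_mul_inv, mul_comm, mul_assoc]
    _ ≤ ∫⁻ x, (F x / c) ^ p x * C⁻¹ := by
        gcongr with x
        rw [div_eq_mul_inv]
        gcongr
        exact hCK x
    _ ≤ C * C⁻¹ := by
        rw [lintegral_mul_const' _ _ (ENNReal.inv_ne_top.2 (zero_lt_one.trans_le hC).ne')]
        gcongr
        exact hmod c hc0 hct (lintegral_div_rpow_le_one_of_luxNorm_lt
          (fun x ↦ hpm.le.trans (hp x)) hc)
    _ ≤ 1 := ENNReal.mul_inv_le_one C

lemma ae_ne_top_of_luxNorm_ne_top (hp : ∀ x, 0 < p x) (hpm : Measurable p) (hF : Measurable F)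
    (h : luxNorm p F ≠ ∞) : ∀ᵐ x, F x ≠ ∞ := by
  obtain ⟨c, hc, hct⟩ := exists_between h.lt_top
  have hint := lintegral_div_rpow_le_one_of_luxNorm_lt (fun x ↦ (hp x).le) hc
  filter_upwards [ae_lt_top ((hF.div_const c).pow hpm) (hint.trans_lt one_lt_top).ne] with x hx htop
  rw [htop, ENNReal.top_div_of_ne_top hct.ne, ENNReal.top_rpow_of_pos (hp x)] at hx
  exact hx.ne rfl

end luxNorm

/-! ### Sets of density at least one half -/

section density

variable {X : Type*} [MeasurableSpace X] {μ : Measure X} {Q E : Set X}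

lemma setLIntegral_le_mul_setLIntegral_inter (hQ : MeasurableSet Q) (hE : MeasurableSet E)
    (hμ : μ Q ≠ ∞) (hQE : μ Q ≤ 2 * μ (Q ∩ E)) {h : X → ℝ≥0∞} {B : ℝ≥0∞} (hBt : B ≠ ∞)
    (hB : ∀ x ∈ Q, ∀ y ∈ Q, h x ≤ B * h y) :
    ∫⁻ x in Q, h x ∂μ ≤ 2 * B * ∫⁻ x in Q ∩ E, h x ∂μ := by
  obtain h0 | h0 := eq_or_ne (μ (Q ∩ E)) 0
  · rw [h0, mul_zero, nonpos_iff_eq_zero] at hQE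
    rw [setLIntegral_measure_zero _ _ hQE]
    exact zero_le
  have hle (y) (hy : y ∈ Q ∩ E) : ∫⁻ x in Q, h x ∂μ ≤ B * μ Q * h y := by
    calc ∫⁻ x in Q, h x ∂μ ≤ ∫⁻ _ in Q, B * h y ∂μ :=
          setLIntegral_mono' hQ fun x hx ↦ hB x hx y hy.1
      _ = B * μ Q * h y := by rw [setLIntegral_const, mul_right_comm]
  refine (ENNReal.mul_le_mul_iff_right h0 (measure_ne_top_of_subset inter_subset_left hμ)).1 ?_
  calc μ (Q ∩ E) * ∫⁻ x in Q, h x ∂μ = ∫⁻ _ in Q ∩ E, (∫⁻ x in Q, h x ∂μ) ∂μ := by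
        rw [setLIntegral_const, mul_comm]
    _ ≤ ∫⁻ y in Q ∩ E, B * μ Q * h y ∂μ := setLIntegral_mono' (hQ.inter hE) hle
    _ = B * μ Q * ∫⁻ y in Q ∩ E, h y ∂μ := lintegral_const_mul' _ _ (ENNReal.mul_ne_top hBt hμ)
    _ ≤ B * (2 * μ (Q ∩ E)) * ∫⁻ y in Q ∩ E, h y ∂μ := by gcongr
    _ = μ (Q ∩ E) * (2 * B * ∫⁻ x in Q ∩ E, h x ∂μ) := by ring

lemma measure_le_two_mul_measure_inter_le (hQ : MeasurableSet Q) (hμ : μ Q ≠ ∞) {f : X → ℝ≥0∞}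
    (hf : Measurable f) {a : ℝ≥0∞} (ha : ∫⁻ x in Q, f x ∂μ ≤ a * μ Q) :
    μ Q ≤ 2 * μ (Q ∩ {x | f x ≤ 2 * a}) := by
  have hA : MeasurableSet {x | f x ≤ 2 * a} := measurableSet_le hf measurable_const
  suffices h : 2 * μ (Q \ {x | f x ≤ 2 * a}) ≤ μ Q by
    rw [← measure_inter_add_sdiff (μ := μ) Q hA, two_mul (μ _)] at h ⊢
    exact add_le_add_right (ENNReal.le_of_add_le_add_right
      (measure_ne_top_of_subset sdiff_subset hμ) h) _
  have hnot (x) (hx : x ∈ Q \ {x | f x ≤ 2 * a}) : 2 * a < f x := not_le.1 hx.2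
  obtain rfl | hat := eq_or_ne a ∞
  · have hempty : Q \ {x | f x ≤ 2 * ∞} = ∅ :=
      sdiff_eq_empty.2 fun x _ ↦ by simp [ENNReal.mul_top]
    rw [hempty, measure_empty, mul_zero]
    exact zero_le
  obtain rfl | ha0 := eq_or_ne a 0
  · rw [zero_mul, nonpos_iff_eq_zero, setLIntegral_eq_zero_iff hQ hf] at ha
    have hnull : μ (Q \ {x | f x ≤ 2 * 0}) = 0 := measure_eq_zero_iff_ae_notMem.2 <|
      ha.mono fun x hx0 hx ↦ (hnot x hx).ne' (by rw [hx0 hx.1, mul_zero])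
    rw [hnull, mul_zero]
    exact zero_le
  refine (ENNReal.mul_le_mul_iff_right ha0 hat).1 ?_
  calc a * (2 * μ (Q \ {x | f x ≤ 2 * a})) = ∫⁻ _ in Q \ {x | f x ≤ 2 * a}, 2 * a ∂μ := by
        rw [setLIntegral_const]
        ring
    _ ≤ ∫⁻ x in Q \ {x | f x ≤ 2 * a}, f x ∂μ :=
        setLIntegral_mono' (hQ.diff hA) fun x hx ↦ (hnot x hx).le
    _ ≤ ∫⁻ x in Q, f x ∂μ := lintegral_mono_set sdiff_subset
    _ ≤ a * μ Q := ha

end density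

/-- A sequence of measurable sets `E v` that occupy at least half of each dyadic cube of
level `v`. These are the sets to which sums over cubes are restricted. -/
structure IsHalfDense (E : ℕ → Set (En n)) : Prop where
  measurableSet (v : ℕ) : MeasurableSet (E v)
  volume_le (v : ℕ) (m : Fin n → ℤ) :
    volume (dyadicCube n v m) ≤ 2 * volume (dyadicCube n v m ∩ E v)

/-! ### Telescoping inequalities for powers of partial sums -/

section telescoping

variable {s : ℝ} {σ sm : ℝ≥0}

lemma mul_rpow_sub_one (hs : 0 < s) (x : ℝ≥0) : x * x ^ (s - 1) = x ^ s := by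
  obtain rfl | hx := eq_or_ne x 0
  · rw [zero_mul, NNReal.zero_rpow hs.ne']
  · rw [NNReal.rpow_sub_one hx, mul_div_cancel₀ _ hx]

lemma one_le_rpow_add_mul (hσ : 1 ≤ σ) (hsσ : s ≤ σ) {r t : ℝ≥0} (h : r + t = 1) :
    1 ≤ r ^ s + σ * t := by
  obtain hs1 | hs1 := le_total s 1
  · have hr : r ≤ 1 := h.symm ▸ le_self_add
    calc 1 = r + t := h.symm
      _ ≤ r ^ s + σ * t := add_le_add (Real.self_le_rpow_of_le_one r.2 hr hs1)
          (le_mul_of_one_le_left zero_le hσ)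
  · have hbern := one_add_mul_self_le_rpow_one_add (s := -(t : ℝ))
      (by have : (r + t : ℝ) = 1 := mod_cast h
          linarith [r.2]) hs1
    have hr : (r : ℝ) = 1 + -(t : ℝ) := by
      have : (r + t : ℝ) = 1 := mod_cast h
      linarith
    rw [← NNReal.coe_le_coe]
    push_cast
    rw [hr]
    nlinarith [t.2]

lemma rpow_add_mul_le_one (hs : 0 < s) (hs1 : s ≤ 1) (hsm : sm ≤ s) {r t : ℝ≥0} (h : r + t = 1) :
    r ^ s + sm * t ≤ 1 := by
  have hr : (r : ℝ) = 1 + -(t : ℝ) := by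
    have : (r + t : ℝ) = 1 := mod_cast h
    linarith
  have hbern := rpow_one_add_le_one_add_mul_self (s := -(t : ℝ)) (by linarith [r.2]) hs.le hs1
  rw [← NNReal.coe_le_coe]
  push_cast
  rw [hr]
  nlinarith [t.2]

lemma add_rpow_le_rpow_add_mul (hs : 0 < s) (hσ : 1 ≤ σ) (hsσ : s ≤ σ) (x y : ℝ≥0) :
    (x + y) ^ s ≤ x ^ s + σ * (y * (x + y) ^ (s - 1)) := by
  obtain h0 | h0 := eq_or_ne (x + y) 0
  · rw [h0, NNReal.zero_rpow hs.ne']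
    exact zero_le
  have hone : 1 ≤ (x / (x + y)) ^ s + σ * (y / (x + y)) :=
    one_le_rpow_add_mul hσ hsσ (by rw [← add_div, div_self h0])
  calc (x + y) ^ s ≤ (x + y) ^ s * ((x / (x + y)) ^ s + σ * (y / (x + y))) :=
        le_mul_of_one_le_right zero_le hone
    _ = x ^ s + σ * (y * (x + y) ^ (s - 1)) := by
        have := (NNReal.rpow_pos (p := s) (pos_iff_ne_zero.2 h0)).ne'
        rw [NNReal.div_rpow, NNReal.rpow_sub_one h0]
        field_simp

lemma rpow_add_mul_le_add_rpow (hs : 0 < s) (hs1 : s ≤ 1) (hsm : sm ≤ s) (x y : ℝ≥0) :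
    x ^ s + sm * (y * (x + y) ^ (s - 1)) ≤ (x + y) ^ s := by
  obtain h0 | h0 := eq_or_ne (x + y) 0
  · obtain ⟨rfl, rfl⟩ := add_eq_zero.1 h0
    simp [hs.ne']
  have hone : (x / (x + y)) ^ s + sm * (y / (x + y)) ≤ 1 :=
    rpow_add_mul_le_one hs hs1 hsm (by rw [← add_div, div_self h0])
  calc x ^ s + sm * (y * (x + y) ^ (s - 1))
      = (x + y) ^ s * ((x / (x + y)) ^ s + sm * (y / (x + y))) := by
        have := (NNReal.rpow_pos (p := s) (pos_iff_ne_zero.2 h0)).ne'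
        rw [NNReal.div_rpow, NNReal.rpow_sub_one h0]
        field_simp
    _ ≤ (x + y) ^ s := mul_le_of_le_one_right zero_le hone

lemma sum_rpow_le_mul_sum (hs : 0 < s) (hσ : 1 ≤ σ) (hsσ : s ≤ σ) (β : ℕ → ℝ≥0) (N : ℕ) :
    (∑ u ∈ Finset.range N, β u) ^ s ≤
      σ * ∑ v ∈ Finset.range N, β v * (∑ u ∈ Finset.range (v + 1), β u) ^ (s - 1) := by
  induction N with
  | zero => simp [hs.ne']
  | succ N ih =>
    rw [Finset.sum_range_succ _ N, Finset.sum_range_succ _ N, mul_add]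
    refine (add_rpow_le_rpow_add_mul hs hσ hsσ _ _).trans (add_le_add ih ?_)
    rw [Finset.sum_range_succ _ N]

lemma mul_sum_le_sum_rpow (hs : 0 < s) (hs1 : s ≤ 1) (hsm : sm ≤ s) (γ : ℕ → ℝ≥0) (N : ℕ) :
    sm * ∑ v ∈ Finset.range N, γ v * (∑ u ∈ Finset.range (v + 1), γ u) ^ (s - 1) ≤
      (∑ u ∈ Finset.range N, γ u) ^ s := by
  induction N with
  | zero => simp
  | succ N ih =>
    rw [Finset.sum_range_succ _ N, Finset.sum_range_succ γ N, mul_add]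
    exact (add_le_add_left ih _).trans (rpow_add_mul_le_add_rpow hs hs1 hsm _ _)

lemma mul_rpow_sub_one_le (hs1 : 1 ≤ s) (hsσ : s ≤ σ) {A : ℝ≥0} (hA : 1 ≤ A) (x y : ℝ≥0) :
    y * x ^ (s - 1) ≤ A⁻¹ * x ^ s + A ^ (σ : ℝ) * y ^ s := by
  have hA0 : 0 < A := zero_lt_one.trans_le hA
  have hs : 0 < s := zero_lt_one.trans_le hs1
  obtain hyx | hxy := le_total y (A⁻¹ * x)
  · calc y * x ^ (s - 1) ≤ A⁻¹ * x * x ^ (s - 1) := by gcongr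
      _ = A⁻¹ * x ^ s := by rw [mul_assoc, mul_rpow_sub_one hs]
      _ ≤ _ := le_self_add
  · calc y * x ^ (s - 1) ≤ y * (A * y) ^ (s - 1) := by
          gcongr
          rwa [inv_mul_le_iff₀ hA0] at hxy
      _ = A ^ (s - 1) * y ^ s := by
          rw [NNReal.mul_rpow, mul_left_comm, mul_rpow_sub_one hs]
      _ ≤ A ^ (σ : ℝ) * y ^ s := by
          gcongr
          linarith
      _ ≤ _ := le_add_self

lemma sum_mul_rpow_sub_one_le (hsm0 : 0 < sm) (hsm : sm ≤ s) (hsσ : s ≤ σ) {A : ℝ≥0}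
    (hA : 1 ≤ A) {β γ : ℕ → ℝ≥0} (hγβ : ∀ v, γ v ≤ β v) (N : ℕ) :
    ∑ v ∈ Finset.range N, γ v * (∑ u ∈ Finset.range (v + 1), β u) ^ (s - 1) ≤
      A⁻¹ * (∑ u ∈ Finset.range N, β u) ^ s +
        (sm⁻¹ + A ^ (σ : ℝ)) * (∑ u ∈ Finset.range N, γ u) ^ s := by
  have hs : 0 < s := lt_of_lt_of_le (mod_cast hsm0) hsm
  rw [add_mul]
  obtain hs1 | hs1 := le_total s 1
  · have hterm (v) : γ v * (∑ u ∈ Finset.range (v + 1), β u) ^ (s - 1) ≤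
        γ v * (∑ u ∈ Finset.range (v + 1), γ u) ^ (s - 1) := by
      obtain h0 | h0 := eq_or_ne (γ v) 0
      · simp only [h0, zero_mul, le_refl]
      have hpos : 0 < ∑ u ∈ Finset.range (v + 1), γ u :=
        (pos_iff_ne_zero.2 h0).trans_le
          (Finset.single_le_sum (fun _ _ ↦ zero_le) (Finset.self_mem_range_succ v))
      refine mul_le_mul_right (NNReal.rpow_le_rpow_of_nonpos hpos ?_ (by linarith)) _
      exact Finset.sum_le_sum fun u _ ↦ hγβ u
    calc ∑ v ∈ Finset.range N, γ v * (∑ u ∈ Finset.range (v + 1), β u) ^ (s - 1)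
        ≤ ∑ v ∈ Finset.range N, γ v * (∑ u ∈ Finset.range (v + 1), γ u) ^ (s - 1) :=
          Finset.sum_le_sum fun v _ ↦ hterm v
      _ ≤ sm⁻¹ * (∑ u ∈ Finset.range N, γ u) ^ s :=
          (le_inv_mul_iff₀ hsm0).2 (mul_sum_le_sum_rpow hs hs1 hsm γ N)
      _ ≤ _ := le_add_self.trans' le_self_add
  · calc ∑ v ∈ Finset.range N, γ v * (∑ u ∈ Finset.range (v + 1), β u) ^ (s - 1)
        ≤ (∑ v ∈ Finset.range N, γ v) * (∑ u ∈ Finset.range N, β u) ^ (s - 1) := by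
          rw [Finset.sum_mul]
          gcongr with v hv
          exact Nat.succ_le_of_lt (Finset.mem_range.1 hv)
      _ ≤ _ := mul_rpow_sub_one_le hs1 hsσ hA _ _
      _ ≤ _ := by
          gcongr
          exact le_add_self

end telescoping

/-! ### Restriction of a sum over dyadic cubes to half-dense sets -/

/-- The step function of level `v` with the value `b v m` on the dyadic cube `Q_{v,m}`. -/
def dyadicStep (b : ℕ → (Fin n → ℤ) → ℝ≥0) (v : ℕ) (x : En n) : ℝ≥0 := b v (dyadicIndex v x)

/-- The sum of the step functions of `b` of the levels `0, …, N - 1`. -/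
def dyadicSum (b : ℕ → (Fin n → ℤ) → ℝ≥0) (N : ℕ) (x : En n) : ℝ≥0 :=
  ∑ u ∈ Finset.range N, dyadicStep b u x

/-- The contribution of level `v` to the power `s` of the sums of `b`, up to a factor: the
discrete form of the differential of `S ^ s` divided by `s`. -/
def powerIncrement (s : En n → ℝ) (b : ℕ → (Fin n → ℤ) → ℝ≥0) (v : ℕ) (x : En n) : ℝ≥0 :=
  dyadicStep b v x * dyadicSum b (v + 1) x ^ (s x - 1)

/-- On a cube of level `v` the power `s - 1` of the sum up to level `v`, which varies only through
the exponent, is constant up to the factor `B`. -/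
def IsPowerStable (s : En n → ℝ) (b : ℕ → (Fin n → ℤ) → ℝ≥0) (B : ℝ≥0) : Prop :=
  ∀ (v : ℕ) (x y : En n), dyadicIndex v x = dyadicIndex v y →
    dyadicSum b (v + 1) x ^ (s x - 1) ≤ B * dyadicSum b (v + 1) x ^ (s y - 1)

section core

variable {s : En n → ℝ} {σ sm A B : ℝ≥0} {b : ℕ → (Fin n → ℤ) → ℝ≥0} {E : ℕ → Set (En n)}

lemma measurable_dyadicStep (b : ℕ → (Fin n → ℤ) → ℝ≥0) (v : ℕ) : Measurable (dyadicStep b v) :=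
  (measurable_of_countable (b v)).comp (measurable_dyadicIndex v)

lemma measurable_dyadicSum (b : ℕ → (Fin n → ℤ) → ℝ≥0) (N : ℕ) : Measurable (dyadicSum b N) :=
  Finset.measurable_fun_sum _ fun u _ ↦ measurable_dyadicStep b u

lemma measurable_powerIncrement (hs : Measurable s) (b : ℕ → (Fin n → ℤ) → ℝ≥0) (v : ℕ) :
    Measurable (powerIncrement s b v) :=
  (measurable_dyadicStep b v).mul ((measurable_dyadicSum b _).pow (hs.sub_const 1))

lemma dyadicStep_eq {u v : ℕ} (huv : u ≤ v) {x y : En n} (h : dyadicIndex v x = dyadicIndex v y) :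
    dyadicStep b u x = dyadicStep b u y :=
  congrArg (b u) (dyadicIndex_eq_of_le (mod_cast huv) h)

lemma dyadicSum_eq {v : ℕ} {x y : En n} (h : dyadicIndex v x = dyadicIndex v y) :
    dyadicSum b (v + 1) x = dyadicSum b (v + 1) y :=
  Finset.sum_congr rfl fun _ hu ↦ dyadicStep_eq (Finset.mem_range_succ_iff.1 hu) h

lemma lintegral_dyadicSum_rpow_le (μ : Measure (En n)) (hs : Measurable s) (hs0 : ∀ x, 0 < s x)
    (hσ : 1 ≤ σ) (hsσ : ∀ x, s x ≤ σ) (N : ℕ) :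
    ∫⁻ x, ↑(dyadicSum b N x ^ s x) ∂μ ≤
      σ * ∑ v ∈ Finset.range N, ∫⁻ x, powerIncrement s b v x ∂μ := by
  have hmeas (v) : Measurable fun x ↦ (powerIncrement s b v x : ℝ≥0∞) :=
    (measurable_powerIncrement hs b v).coe_nnreal_ennreal
  rw [← lintegral_finsetSum _ fun v _ ↦ hmeas v,
    ← lintegral_const_mul _ (Finset.measurable_fun_sum _ fun v _ ↦ hmeas v)]
  refine lintegral_mono fun x ↦ ?_
  have hpoint : dyadicSum b N x ^ s x ≤ σ * ∑ v ∈ Finset.range N, powerIncrement s b v x :=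
    sum_rpow_le_mul_sum (hs0 x) hσ (hsσ x) (fun u ↦ dyadicStep b u x) N
  exact (ENNReal.coe_le_coe.2 hpoint).trans_eq (by push_cast; rfl)

lemma setLIntegral_powerIncrement_le (hE : IsHalfDense E) (hB : IsPowerStable s b B) (v : ℕ)
    (m : Fin n → ℤ) :
    ∫⁻ x in dyadicCube n 0 m, powerIncrement s b v x ≤
      2 * B * ∫⁻ x in dyadicCube n 0 m, (E v).indicator (fun x ↦ ↑(powerIncrement s b v x)) x := by
  rw [← lintegral_const_mul' _ _ (ENNReal.mul_ne_top ofNat_ne_top coe_ne_top)]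
  refine setLIntegral_dyadicCube_le_of_subcubes (Nat.cast_nonneg v) (fun k ↦ ?_) m
  rw [lintegral_const_mul' _ _ (ENNReal.mul_ne_top ofNat_ne_top coe_ne_top),
    setLIntegral_indicator (hE.measurableSet v), inter_comm]
  refine setLIntegral_le_mul_setLIntegral_inter (measurableSet_dyadicCube v k)
    (hE.measurableSet v) (volume_dyadicCube_ne_top v k) (hE.volume_le v k) coe_ne_top ?_
  intro x hx y hy
  have hxy : dyadicIndex v x = dyadicIndex v y :=
    (mem_dyadicCube_iff.1 hx).trans (mem_dyadicCube_iff.1 hy).symm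
  rw [powerIncrement, powerIncrement, ← dyadicStep_eq le_rfl hxy, ← dyadicSum_eq hxy]
  norm_cast
  rw [mul_left_comm]
  gcongr
  exact hB v x y hxy

lemma sum_lintegral_indicator_powerIncrement_le (μ : Measure (En n)) (hs : Measurable s)
    (hsm0 : 0 < sm) (hsm : ∀ x, sm ≤ s x) (hsσ : ∀ x, s x ≤ σ) (hA : 1 ≤ A)
    (hE : ∀ v, MeasurableSet (E v)) (N : ℕ) :
    ∑ v ∈ Finset.range N, ∫⁻ x, (E v).indicator (fun x ↦ ↑(powerIncrement s b v x)) x ∂μ ≤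
      A⁻¹ * ∫⁻ x, ↑(dyadicSum b N x ^ s x) ∂μ + ↑(sm⁻¹ + A ^ (σ : ℝ)) *
        ∫⁻ x, ↑((∑ v ∈ Finset.range N, (E v).indicator (dyadicStep b v) x) ^ s x) ∂μ := by
  have hmeasS : Measurable fun x ↦ (↑(dyadicSum b N x ^ s x) : ℝ≥0∞) :=
    ((measurable_dyadicSum b N).pow hs).coe_nnreal_ennreal
  have hmeas (v) : Measurable ((E v).indicator fun x ↦ (powerIncrement s b v x : ℝ≥0∞)) :=
    (measurable_powerIncrement hs b v).coe_nnreal_ennreal.indicator (hE v)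
  have hind (v x) : (E v).indicator (fun x ↦ (powerIncrement s b v x : ℝ≥0∞)) x =
      ↑((E v).indicator (dyadicStep b v) x * dyadicSum b (v + 1) x ^ (s x - 1)) := by
    by_cases hx : x ∈ E v <;> simp [hx, powerIncrement]
  rw [← lintegral_finsetSum _ fun v _ ↦ hmeas v, ← lintegral_const_mul _ hmeasS,
    ← lintegral_const_mul' _ _ coe_ne_top,
    ← lintegral_add_left (hmeasS.const_mul _)]
  refine lintegral_mono fun x ↦ ?_
  have hpoint := sum_mul_rpow_sub_one_le hsm0 (hsm x) (hsσ x) hA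
    (fun v ↦ indicator_le_self' (fun _ _ ↦ zero_le) x : ∀ v,
      (E v).indicator (dyadicStep b v) x ≤ dyadicStep b v x) N
  simp only [hind]
  exact_mod_cast ENNReal.coe_le_coe.2 hpoint

lemma le_two_mul_of_le_half_add {a c : ℝ≥0∞} (ha : a ≠ ∞) (h : a ≤ a / 2 + c) : a ≤ 2 * c := by
  have hhalf : a / 2 ≠ ∞ := (ENNReal.div_lt_top ha two_ne_zero).ne
  nth_rw 1 [← ENNReal.add_halves a] at h
  calc a = 2 * (a / 2) := (ENNReal.mul_div_cancel two_ne_zero ofNat_ne_top).symm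
    _ ≤ 2 * c := by gcongr; exact (ENNReal.add_le_add_iff_left hhalf).1 h

lemma setLIntegral_dyadicSum_rpow_ne_top (hs0 : ∀ x, 0 < s x) (hsσ : ∀ x, s x ≤ σ)
    {H : ℕ → ℝ≥0} (hH : ∀ v m, b v m ≤ H v) (N : ℕ) (m : Fin n → ℤ) :
    ∫⁻ x in dyadicCube n 0 m, ↑(dyadicSum b N x ^ s x) ≠ ∞ := by
  set h := max 1 (∑ u ∈ Finset.range N, H u)
  have hle (x) : dyadicSum b N x ^ s x ≤ h ^ (σ : ℝ) := by
    calc dyadicSum b N x ^ s x ≤ h ^ s x := by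
          refine NNReal.rpow_le_rpow ?_ (hs0 x).le
          exact (Finset.sum_le_sum fun u _ ↦ hH u _).trans (le_max_right _ _)
      _ ≤ h ^ (σ : ℝ) := NNReal.rpow_le_rpow_of_exponent_le (le_max_left _ _) (hsσ x)
  refine ne_top_of_le_ne_top ?_ (lintegral_mono fun x ↦ ENNReal.coe_le_coe.2 (hle x))
  rw [setLIntegral_const]
  exact ENNReal.mul_ne_top coe_ne_top (volume_dyadicCube_ne_top 0 m)

lemma setLIntegral_dyadicSum_rpow_le (hs : Measurable s) (hsm0 : 0 < sm) (hsm : ∀ x, sm ≤ s x)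
    (hσ : 1 ≤ σ) (hsσ : ∀ x, s x ≤ σ) (hB1 : 1 ≤ B) (hA : A = 4 * B * σ) {H : ℕ → ℝ≥0}
    (hH : ∀ v m, b v m ≤ H v) (hE : IsHalfDense E) (hB : IsPowerStable s b B) (N : ℕ)
    (m : Fin n → ℤ) :
    ∫⁻ x in dyadicCube n 0 m, ↑(dyadicSum b N x ^ s x) ≤
      ↑(A * (sm⁻¹ + A ^ (σ : ℝ))) * ∫⁻ x in dyadicCube n 0 m,
        ↑((∑ v ∈ Finset.range N, (E v).indicator (dyadicStep b v) x) ^ s x) := by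
  have hs0 (x) : 0 < s x := lt_of_lt_of_le (mod_cast hsm0) (hsm x)
  have hA1 : 1 ≤ A := by
    have : 1 ≤ B * σ := one_le_mul hB1 hσ
    rw [hA, mul_assoc]
    exact one_le_mul (by norm_num) this
  set X := ∫⁻ x in dyadicCube n 0 m, (↑(dyadicSum b N x ^ s x) : ℝ≥0∞)
  set Y := ∫⁻ x in dyadicCube n 0 m,
    (↑((∑ v ∈ Finset.range N, (E v).indicator (dyadicStep b v) x) ^ s x) : ℝ≥0∞)
  have hA2 : (σ * (2 * B) : ℝ≥0∞) = A / 2 := by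
    rw [hA, ENNReal.eq_div_iff two_ne_zero ofNat_ne_top]
    push_cast
    ring
  have hAinv : (A / 2 * ↑A⁻¹ : ℝ≥0∞) = 2⁻¹ := by
    rw [div_eq_mul_inv, mul_right_comm, ← ENNReal.coe_mul,
      mul_inv_cancel₀ (zero_lt_one.trans_le hA1).ne', ENNReal.coe_one, one_mul]
  have habsorb : X ≤ X / 2 + A / 2 * (↑(sm⁻¹ + A ^ (σ : ℝ)) * Y) := by
    calc X ≤ σ * ∑ v ∈ Finset.range N, ∫⁻ x in dyadicCube n 0 m, powerIncrement s b v x :=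
          lintegral_dyadicSum_rpow_le _ hs hs0 hσ hsσ N
      _ ≤ σ * ∑ v ∈ Finset.range N, 2 * B *
            ∫⁻ x in dyadicCube n 0 m, (E v).indicator (fun x ↦ ↑(powerIncrement s b v x)) x := by
          gcongr with v
          exact setLIntegral_powerIncrement_le hE hB v m
      _ ≤ σ * (2 * B * (A⁻¹ * X + ↑(sm⁻¹ + A ^ (σ : ℝ)) * Y)) := by
          rw [← Finset.mul_sum]
          gcongr
          exact sum_lintegral_indicator_powerIncrement_le _ hs hsm0 hsm hsσ hA1 hE.measurableSet N
      _ = X / 2 + A / 2 * (↑(sm⁻¹ + A ^ (σ : ℝ)) * Y) := by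
          rw [← mul_assoc, hA2, mul_add, ← mul_assoc, hAinv, mul_comm, ← div_eq_mul_inv]
  calc X ≤ 2 * (A / 2 * (↑(sm⁻¹ + A ^ (σ : ℝ)) * Y)) :=
        le_two_mul_of_le_half_add (setLIntegral_dyadicSum_rpow_ne_top hs0 hsσ hH N m) habsorb
    _ = ↑(A * (sm⁻¹ + A ^ (σ : ℝ))) * Y := by
        rw [← mul_assoc, ENNReal.mul_div_cancel two_ne_zero ofNat_ne_top, ENNReal.coe_mul,
          mul_assoc]

lemma lintegral_tsum_dyadicStep_rpow_le (hs : Measurable s) (hsm0 : 0 < sm) (hsm : ∀ x, sm ≤ s x)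
    (hσ : 1 ≤ σ) (hsσ : ∀ x, s x ≤ σ) (hB1 : 1 ≤ B) (hA : A = 4 * B * σ) {H : ℕ → ℝ≥0}
    (hH : ∀ v m, b v m ≤ H v) (hE : IsHalfDense E) (hB : IsPowerStable s b B) :
    ∫⁻ x, (∑' v, (dyadicStep b v x : ℝ≥0∞)) ^ s x ≤ ↑(A * (sm⁻¹ + A ^ (σ : ℝ))) *
      ∫⁻ x, (∑' v, (E v).indicator (fun x ↦ (dyadicStep b v x : ℝ≥0∞)) x) ^ s x := by
  have hs0 (x) : 0 < s x := lt_of_lt_of_le (mod_cast hsm0) (hsm x)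
  have hcoe (N x) : (↑(dyadicSum b N x ^ s x) : ℝ≥0∞) =
      (∑ v ∈ Finset.range N, (dyadicStep b v x : ℝ≥0∞)) ^ s x := by
    rw [ENNReal.coe_rpow_of_nonneg _ (hs0 x).le, dyadicSum, ENNReal.ofNNReal_finsetSum]
  have hcoeE (N x) : (↑((∑ v ∈ Finset.range N, (E v).indicator (dyadicStep b v) x) ^ s x) : ℝ≥0∞) ≤
      (∑' v, (E v).indicator (fun x ↦ (dyadicStep b v x : ℝ≥0∞)) x) ^ s x := by
    rw [ENNReal.coe_rpow_of_nonneg _ (hs0 x).le, ENNReal.ofNNReal_finsetSum]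
    simp only [ENNReal.coe_indicator]
    exact ENNReal.rpow_le_rpow (ENNReal.sum_le_tsum _) (hs0 x).le
  have hlim : Filter.Tendsto (fun N ↦ ∫⁻ x, (↑(dyadicSum b N x ^ s x) : ℝ≥0∞)) Filter.atTop
      (nhds (∫⁻ x, (∑' v, (dyadicStep b v x : ℝ≥0∞)) ^ s x)) := by
    simp only [hcoe]
    refine lintegral_tendsto_of_tendsto_of_monotone (fun N ↦ ?_) (.of_forall fun x N M hNM ↦ ?_)
      (.of_forall fun x ↦ ?_)
    · simp only [← hcoe]
      exact ((measurable_dyadicSum b N).pow hs).coe_nnreal_ennreal.aemeasurable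
    · exact ENNReal.rpow_le_rpow (Finset.sum_le_sum_of_subset (Finset.range_mono hNM)) (hs0 x).le
    · exact (ENNReal.continuous_rpow_const.tendsto _).comp (ENNReal.tendsto_nat_tsum _)
  refine le_of_tendsto' hlim fun N ↦ ?_
  rw [lintegral_eq_tsum_dyadicCube volume 0, lintegral_eq_tsum_dyadicCube volume 0,
    ← ENNReal.tsum_mul_left]
  refine ENNReal.tsum_le_tsum fun m ↦ ?_
  refine (setLIntegral_dyadicSum_rpow_le hs hsm0 hsm hσ hsσ hB1 hA hH hE hB N m).trans ?_
  gcongr with x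
  exact hcoeE N x

end core

/-! ### Perturbation by a decaying weight -/

/-- A weight on the unit cubes `Q_{0,m}` that decays polynomially at infinity. -/
def decayWeight (κ : ℝ) (m : Fin n → ℤ) : ℝ≥0 :=
  (Real.exp 1 + ‖(dyadicCorner 0 m : En n)‖).toNNReal ^ (-κ)

/-- The bound for the coefficients of level `v` that follows from the bound `K` for the modular
of their sum. -/
def coeffBound (n : ℕ) (sm K : ℝ≥0) (v : ℕ) : ℝ≥0 := (2 * K * 2 ^ (v * n)) ^ (sm⁻¹ : ℝ)

section perturbation

variable {s : En n → ℝ} {σ sm K : ℝ≥0} {κ : ℝ} {b w : ℕ → (Fin n → ℤ) → ℝ≥0} {E : ℕ → Set (En n)}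

lemma decayWeight_pos (κ : ℝ) (m : Fin n → ℤ) : 0 < decayWeight κ m :=
  NNReal.rpow_pos (Real.toNNReal_pos.2 (by positivity))

lemma coe_decayWeight (κ : ℝ) (m : Fin n → ℤ) :
    (decayWeight κ m : ℝ) = (Real.exp 1 + ‖(dyadicCorner 0 m : En n)‖) ^ (-κ) := by
  rw [decayWeight, NNReal.coe_rpow, Real.coe_toNNReal _ (by positivity)]

lemma decayWeight_rpow_le (hsm0 : 0 < sm) (hsm : ∀ x, sm ≤ s x) (x : En n) :
    (decayWeight ((n + 1) / sm) (dyadicIndex 0 x) : ℝ) ^ s x ≤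
      (n + 2) ^ (n + 1 : ℝ) * (1 + ‖x‖) ^ (-(n + 1) : ℝ) := by
  set z : En n := dyadicCorner 0 (dyadicIndex 0 x)
  have hsm0' : (0 : ℝ) < sm := mod_cast hsm0
  have hexp := Real.add_one_le_exp 1
  have hbase : 1 ≤ Real.exp 1 + ‖z‖ := by linarith [norm_nonneg z]
  have hdist : ‖x - z‖ ≤ n + 1 := by
    simpa using norm_sub_le_of_dyadicIndex_eq (dyadicIndex_dyadicCorner 0 (dyadicIndex 0 x)).symm
  have hcompare : 1 + ‖x‖ ≤ (n + 2) * (Real.exp 1 + ‖z‖) := by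
    have := norm_le_norm_add_norm_sub' x z
    nlinarith [norm_nonneg z, n.cast_nonneg (α := ℝ)]
  rw [coe_decayWeight, ← Real.rpow_mul (by positivity)]
  calc (Real.exp 1 + ‖z‖) ^ (-((n + 1) / sm) * s x) ≤ (Real.exp 1 + ‖z‖) ^ (-(n + 1) : ℝ) := by
        refine Real.rpow_le_rpow_of_exponent_le hbase ?_
        rw [neg_mul, neg_le_neg_iff, div_mul_eq_mul_div, le_div_iff₀ hsm0']
        exact mul_le_mul_of_nonneg_left (hsm x) (by positivity)
    _ = (n + 2) ^ (n + 1 : ℝ) * ((n + 2) * (Real.exp 1 + ‖z‖)) ^ (-(n + 1) : ℝ) := by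
        rw [Real.mul_rpow (by positivity) (by positivity), ← mul_assoc,
          ← Real.rpow_add (by positivity), add_neg_cancel, Real.rpow_zero, one_mul]
    _ ≤ (n + 2) ^ (n + 1 : ℝ) * (1 + ‖x‖) ^ (-(n + 1) : ℝ) := by
        gcongr ?_ * ?_
        exact Real.rpow_le_rpow_of_nonpos (by positivity) hcompare
          (by linarith [n.cast_nonneg (α := ℝ)])

lemma exists_lintegral_decayWeight_rpow_le (hsm0 : 0 < sm) (hsm : ∀ x, sm ≤ s x) :
    ∃ C : ℝ≥0,
      ∫⁻ x, (decayWeight ((n + 1) / sm) (dyadicIndex 0 x) : ℝ≥0∞) ^ s x ≤ C := by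
  have hfin := finite_integral_one_add_norm (E := En n) (μ := volume) (r := n + 1)
    (by rw [finrank_euclideanSpace_fin]; linarith)
  have hle (x : En n) : (decayWeight ((n + 1) / sm) (dyadicIndex 0 x) : ℝ≥0∞) ^ s x ≤
      ENNReal.ofReal ((n + 2) ^ (n + 1 : ℝ)) * ENNReal.ofReal ((1 + ‖x‖) ^ (-(n + 1) : ℝ)) := by
    rw [← ENNReal.coe_rpow_of_nonneg _ (sm.coe_nonneg.trans (hsm x)),
      ← ENNReal.ofReal_mul (by positivity), ← ENNReal.ofReal_coe_nnreal]
    exact ENNReal.ofReal_le_ofReal (decayWeight_rpow_le hsm0 hsm x)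
  have hint := lintegral_mono (μ := volume) hle
  rw [lintegral_const_mul' _ _ ENNReal.ofReal_ne_top] at hint
  lift ENNReal.ofReal ((n + 2) ^ (n + 1 : ℝ)) *
    ∫⁻ x : En n, ENNReal.ofReal ((1 + ‖x‖) ^ (-(n + 1) : ℝ)) to ℝ≥0
    using ENNReal.mul_ne_top ENNReal.ofReal_ne_top hfin.ne with C
  exact ⟨C, hint⟩

lemma volume_dyadicCube_natCast (v : ℕ) (m : Fin n → ℤ) :
    volume (dyadicCube n v m) = ((2 ^ (v * n))⁻¹ : ℝ≥0) := by
  rw [volume_dyadicCube, zpow_neg, zpow_natCast, inv_pow, ← pow_mul, ENNReal.ofReal]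
  congr 1
  ext
  simp

lemma le_coeffBound (hsm0 : 0 < sm) (hsm : ∀ x, sm ≤ s x) (hK : 1 ≤ K) (hE : IsHalfDense E)
    (hint : ∫⁻ x, (∑' v, (E v).indicator (fun x ↦ (dyadicStep b v x : ℝ≥0∞)) x) ^ s x ≤ K)
    (v : ℕ) (m : Fin n → ℤ) : b v m ≤ coeffBound n sm K v := by
  have hsm0' : (0 : ℝ) < sm := mod_cast hsm0
  obtain hb1 | hb1 := le_total (b v m) 1
  · refine hb1.trans (NNReal.one_le_rpow ?_ (by positivity))
    exact one_le_mul (one_le_mul one_le_two hK) (one_le_pow₀ one_le_two)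
  have hpoint (x) (hx : x ∈ dyadicCube n v m ∩ E v) : (b v m : ℝ≥0∞) ^ (sm : ℝ) ≤
      (∑' u, (E u).indicator (fun x ↦ (dyadicStep b u x : ℝ≥0∞)) x) ^ s x := by
    have hterm :
        (b v m : ℝ≥0∞) ≤ ∑' u, (E u).indicator (fun x ↦ (dyadicStep b u x : ℝ≥0∞)) x := by
      refine le_trans (le_of_eq ?_) (ENNReal.le_tsum v)
      rw [indicator_of_mem hx.2, dyadicStep, mem_dyadicCube_iff.1 hx.1]
    exact (ENNReal.rpow_le_rpow_of_exponent_le (mod_cast hb1) (hsm x)).trans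
      (ENNReal.rpow_le_rpow hterm (sm.coe_nonneg.trans (hsm x)))
  have hmass : (b v m : ℝ≥0∞) ^ (sm : ℝ) * volume (dyadicCube n v m) ≤ 2 * K := by
    calc (b v m : ℝ≥0∞) ^ (sm : ℝ) * volume (dyadicCube n v m)
        ≤ (b v m : ℝ≥0∞) ^ (sm : ℝ) * (2 * volume (dyadicCube n v m ∩ E v)) := by
          gcongr
          exact hE.volume_le v m
      _ = 2 * ∫⁻ _ in dyadicCube n v m ∩ E v, (b v m : ℝ≥0∞) ^ (sm : ℝ) := by
          rw [setLIntegral_const]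
          ring
      _ ≤ 2 * K := by
          gcongr
          exact (setLIntegral_mono' ((measurableSet_dyadicCube v m).inter (hE.measurableSet v))
            hpoint).trans ((setLIntegral_le_lintegral _ _).trans hint)
  rw [volume_dyadicCube_natCast, ← ENNReal.coe_rpow_of_nonneg _ sm.coe_nonneg] at hmass
  have hmass' : b v m ^ (sm : ℝ) * (2 ^ (v * n))⁻¹ ≤ 2 * K := mod_cast hmass
  rw [mul_inv_le_iff₀ (by positivity)] at hmass'
  exact (NNReal.le_rpow_inv_iff hsm0').2 hmass'

lemma coeffBound_mono (n : ℕ) (sm K : ℝ≥0) : Monotone (coeffBound n sm K) := fun u v huv ↦ by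
  unfold coeffBound
  gcongr
  exact one_le_two

lemma log_dyadicSum_le (hK : 1 ≤ K) (hb : ∀ v m, b v m ≤ coeffBound n sm K v) {v : ℕ} {x : En n}
    (hpos : 0 < dyadicSum b (v + 1) x) :
    Real.log (dyadicSum b (v + 1) x) ≤
      (1 + (sm : ℝ)⁻¹ * (Real.log (2 * K) + n * Real.log 2)) * (v + 1) := by
  have hsum : dyadicSum b (v + 1) x ≤ (v + 1) * coeffBound n sm K v := by
    calc dyadicSum b (v + 1) x ≤ ∑ _u ∈ Finset.range (v + 1), coeffBound n sm K v :=
          Finset.sum_le_sum fun u hu ↦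
            (hb u _).trans (coeffBound_mono n sm K (Finset.mem_range_succ_iff.1 hu))
      _ = (v + 1) * coeffBound n sm K v := by simp
  have hlogK : 0 ≤ Real.log (2 * K) :=
    Real.log_nonneg (by linarith [show (1 : ℝ) ≤ K from mod_cast hK])
  have hlogv : Real.log (v + 1) ≤ v := by
    linarith [Real.log_le_sub_one_of_pos (v.cast_add_one_pos (α := ℝ))]
  have hlog2 : 0 ≤ n * Real.log 2 := by positivity
  calc Real.log (dyadicSum b (v + 1) x) ≤ Real.log ((v + 1) * coeffBound n sm K v) :=
        Real.log_le_log (mod_cast hpos) (mod_cast hsum)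
    _ = Real.log (v + 1) + (sm : ℝ)⁻¹ * (Real.log (2 * K) + n * Real.log 2 * v) := by
        simp only [coeffBound]
        push_cast
        rw [Real.log_mul (by positivity) (by positivity), Real.log_rpow (by positivity),
          Real.log_mul (by positivity) (by positivity), Real.log_pow]
        push_cast
        ring
    _ ≤ 1 * (v + 1) + (sm : ℝ)⁻¹ * ((Real.log (2 * K) + n * Real.log 2) * (v + 1)) := by
        gcongr
        · linarith
        · nlinarith [v.cast_nonneg (α := ℝ)]
    _ = _ := by ring

lemma rpow_sub_one_le_exp_mul {S : ℝ≥0} (hS : 0 < S) {p q D : ℝ}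
    (h : |Real.log S| * |p - q| ≤ D) : S ^ (p - 1) ≤ (Real.exp D).toNNReal * S ^ (q - 1) := by
  have hS' : (0 : ℝ) < S := mod_cast hS
  rw [← NNReal.coe_le_coe]
  push_cast
  rw [Real.coe_toNNReal _ (Real.exp_pos D).le, Real.rpow_def_of_pos hS', Real.rpow_def_of_pos hS',
    ← Real.exp_add, Real.exp_le_exp]
  have := (le_abs_self _).trans ((abs_mul (Real.log S) (p - q)).trans_le h)
  linarith

lemma exists_isPowerStable {c : ℝ} (hg : GlobLogHolder c s) (hκ : 0 ≤ κ) (sm : ℝ≥0) (hK : 1 ≤ K) :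
    ∃ B : ℝ≥0, 1 ≤ B ∧ ∀ b : ℕ → (Fin n → ℤ) → ℝ≥0, (∀ m, decayWeight κ m ≤ b 0 m) →
      (∀ v m, b v m ≤ coeffBound n sm K v) → IsPowerStable s b B := by
  obtain ⟨C₁, hC₁, hloc⟩ := hg.1.exists_abs_sub_mul_le
  obtain ⟨C₂, hC₂, hglob⟩ := hg.exists_abs_sub_mul_log_le
  set a := 1 + (sm : ℝ)⁻¹ * (Real.log (2 * K) + n * Real.log 2)
  have ha : 0 ≤ a := by
    have := Real.log_nonneg (show (1 : ℝ) ≤ 2 * K by linarith [show (1 : ℝ) ≤ K from mod_cast hK])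
    positivity
  refine ⟨(Real.exp (a * C₁ + κ * C₂)).toNNReal, ?_, fun b hb0 hb v x y hxy ↦ ?_⟩
  · rw [Real.one_le_toNNReal]
    exact Real.one_le_exp (by positivity)
  set z : En n := dyadicCorner 0 (dyadicIndex 0 x)
  set S := dyadicSum b (v + 1) x
  have hlow : decayWeight κ (dyadicIndex 0 x) ≤ S := (hb0 _).trans <|
    Finset.single_le_sum (f := fun u ↦ dyadicStep b u x) (fun _ _ ↦ zero_le)
      (Finset.mem_range.2 v.succ_pos)
  have hS : 0 < S := (decayWeight_pos _ _).trans_le hlow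
  have hloglow : -(κ * Real.log (Real.exp 1 + ‖z‖)) ≤ Real.log S := by
    have := Real.log_le_log (mod_cast decayWeight_pos _ _) (NNReal.coe_le_coe.2 hlow)
    rwa [coe_decayWeight, Real.log_rpow (by positivity), neg_mul] at this
  have hlog : |Real.log S| ≤ a * (v + 1) + κ * Real.log (Real.exp 1 + ‖z‖) := by
    have hlogz := one_le_log_exp_one_add (norm_nonneg z)
    have hup : Real.log S ≤ a * (v + 1) := log_dyadicSum_le hK hb hS
    have h1 : 0 ≤ a * (v + 1) := by positivity
    have h2 : 0 ≤ κ * Real.log (Real.exp 1 + ‖z‖) := by positivity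
    exact abs_le.2 ⟨by linarith, by linarith⟩
  refine rpow_sub_one_le_exp_mul hS ?_
  calc |Real.log S| * |s x - s y|
      ≤ (a * (v + 1) + κ * Real.log (Real.exp 1 + ‖z‖)) * |s x - s y| := by gcongr
    _ = a * (|s x - s y| * (v + 1)) + κ * (|s x - s y| * Real.log (Real.exp 1 + ‖z‖)) := by ring
    _ ≤ a * C₁ + κ * C₂ := by
        have hz := dyadicIndex_dyadicCorner 0 (dyadicIndex 0 x)
        gcongr
        · exact hloc v x y hxy
        · exact hglob x y z hz.symm
            ((dyadicIndex_eq_of_le (Nat.cast_nonneg v) hxy).symm.trans hz.symm)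

lemma add_rpow_le_two_rpow_mul {p : ℝ} (hp : 0 ≤ p) (hpσ : p ≤ σ) (x y : ℝ≥0∞) :
    (x + y) ^ p ≤ 2 ^ (σ : ℝ) * (x ^ p + y ^ p) := by
  calc (x + y) ^ p ≤ (2 * max x y) ^ p := by
        gcongr
        rw [two_mul]
        exact add_le_add (le_max_left _ _) (le_max_right _ _)
    _ = 2 ^ p * max x y ^ p := ENNReal.mul_rpow_of_nonneg _ _ hp
    _ ≤ 2 ^ (σ : ℝ) * (x ^ p + y ^ p) := by
        gcongr
        · exact one_le_two
        · obtain h | h := le_total x y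
          · rw [max_eq_right h]
            exact le_add_self
          · rw [max_eq_left h]
            exact le_self_add

lemma lintegral_tsum_indicator_dyadicStep_add_rpow_le (hs : Measurable s) (hs0 : ∀ x, 0 ≤ s x)
    (hsσ : ∀ x, s x ≤ σ) (hE : ∀ v, MeasurableSet (E v)) (b w : ℕ → (Fin n → ℤ) → ℝ≥0) :
    ∫⁻ x, (∑' v, (E v).indicator (fun x ↦ (dyadicStep (b + w) v x : ℝ≥0∞)) x) ^ s x ≤
      2 ^ (σ : ℝ) * ((∫⁻ x, (∑' v, (E v).indicator (fun x ↦ (dyadicStep b v x : ℝ≥0∞)) x) ^ s x) +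
        ∫⁻ x, (∑' v, (dyadicStep w v x : ℝ≥0∞)) ^ s x) := by
  have hpoint (x) : ∑' v, (E v).indicator (fun x ↦ (dyadicStep (b + w) v x : ℝ≥0∞)) x ≤
      (∑' v, (E v).indicator (fun x ↦ (dyadicStep b v x : ℝ≥0∞)) x) +
        ∑' v, (dyadicStep w v x : ℝ≥0∞) := by
    rw [← ENNReal.tsum_add]
    refine ENNReal.tsum_le_tsum fun v ↦ ?_
    by_cases hx : x ∈ E v <;> simp [hx, dyadicStep]
  have hmeas : Measurable fun x ↦
      (∑' v, (E v).indicator (fun x ↦ (dyadicStep b v x : ℝ≥0∞)) x) ^ s x :=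
    (Measurable.tsum fun v ↦
      (measurable_dyadicStep b v).coe_nnreal_ennreal.indicator (hE v)).pow hs
  rw [← lintegral_add_left hmeas, ← lintegral_const_mul' _ _
    (ENNReal.rpow_ne_top_of_nonneg σ.coe_nonneg ofNat_ne_top)]
  exact lintegral_mono fun x ↦ (ENNReal.rpow_le_rpow (hpoint x) (hs0 x)).trans
    (add_rpow_le_two_rpow_mul (hs0 x) (hsσ x) _ _)

lemma lintegral_tsum_dyadicStep_single_rpow (s : En n → ℝ) (w : (Fin n → ℤ) → ℝ≥0) :
    ∫⁻ x, (∑' v, (dyadicStep (Pi.single 0 w) v x : ℝ≥0∞)) ^ s x =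
      ∫⁻ x, (w (dyadicIndex 0 x) : ℝ≥0∞) ^ s x := by
  refine lintegral_congr fun x ↦ ?_
  rw [tsum_eq_single 0 fun v hv ↦ by simp [dyadicStep, hv]]
  simp [dyadicStep]

-- Adding the weight to the coefficients of level zero keeps the partial sums away from zero, so
-- that a power of them oscillates boundedly on cubes.
lemma exists_lintegral_tsum_dyadicStep_rpow_le {c : ℝ} (hg : GlobLogHolder c s) (hsm0 : 0 < sm)
    (hsm : ∀ x, sm ≤ s x) (hσ : 1 ≤ σ) (hsσ : ∀ x, s x ≤ σ) :
    ∃ C : ℝ≥0, 1 ≤ C ∧ ∀ (b : ℕ → (Fin n → ℤ) → ℝ≥0) (E : ℕ → Set (En n)), IsHalfDense E →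
      ∫⁻ x, (∑' v, (E v).indicator (fun x ↦ (dyadicStep b v x : ℝ≥0∞)) x) ^ s x ≤ 1 →
      ∫⁻ x, (∑' v, (dyadicStep b v x : ℝ≥0∞)) ^ s x ≤ C := by
  have hs : Measurable s := hg.1.continuous.measurable
  have hs0 (x) : 0 ≤ s x := sm.coe_nonneg.trans (hsm x)
  obtain ⟨D, hD⟩ := exists_lintegral_decayWeight_rpow_le hsm0 hsm
  set κ : ℝ := (n + 1) / sm
  set K : ℝ≥0 := 2 ^ (σ : ℝ) * (1 + D)
  have hK : 1 ≤ K := one_le_mul (NNReal.one_le_rpow one_le_two σ.coe_nonneg) le_self_add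
  obtain ⟨B, hB1, hB⟩ := exists_isPowerStable hg (κ := κ) (by positivity) sm hK
  set A := 4 * B * σ with hA
  set w : ℕ → (Fin n → ℤ) → ℝ≥0 := Pi.single 0 (decayWeight κ)
  refine ⟨max 1 (A * (sm⁻¹ + A ^ (σ : ℝ)) * K), le_max_left _ _, fun b E hE hb ↦ ?_⟩
  have hmod : ∫⁻ x, (∑' v, (E v).indicator (fun x ↦ (dyadicStep (b + w) v x : ℝ≥0∞)) x) ^ s x ≤
      K := by
    have hadd := lintegral_tsum_indicator_dyadicStep_add_rpow_le hs hs0 hsσ hE.measurableSet b w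
    rw [lintegral_tsum_dyadicStep_single_rpow] at hadd
    rw [ENNReal.coe_mul, ENNReal.coe_add, ENNReal.coe_rpow_of_nonneg _ σ.coe_nonneg]
    exact hadd.trans (mul_le_mul_right (add_le_add hb hD) _)
  have hbound := le_coeffBound hsm0 hsm hK hE hmod
  have hstable : IsPowerStable s (b + w) B := hB _ (fun m ↦ by simp [w]) hbound
  calc ∫⁻ x, (∑' v, (dyadicStep b v x : ℝ≥0∞)) ^ s x
      ≤ ∫⁻ x, (∑' v, (dyadicStep (b + w) v x : ℝ≥0∞)) ^ s x := by
        gcongr with x v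
        · exact hs0 x
        · exact le_self_add (a := b v _)
    _ ≤ ↑(A * (sm⁻¹ + A ^ (σ : ℝ))) * K :=
        (lintegral_tsum_dyadicStep_rpow_le hs hsm0 hsm hσ hsσ hB1 hA hbound hE hstable).trans
          (mul_le_mul_right hmod _)
    _ ≤ ↑(max 1 (A * (sm⁻¹ + A ^ (σ : ℝ)) * K)) := mod_cast le_max_right _ _

theorem exists_luxNorm_tsum_dyadicStep_le {c : ℝ} (hg : GlobLogHolder c s) (hsm0 : 0 < sm)
    (hsm : ∀ x, sm ≤ s x) (hsσ : ∀ x, s x ≤ σ) :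
    ∃ C : ℝ≥0, ∀ (b : ℕ → (Fin n → ℤ) → ℝ≥0) (E : ℕ → Set (En n)), IsHalfDense E →
      luxNorm s (fun x ↦ ∑' v, (dyadicStep b v x : ℝ≥0∞)) ≤
        C * luxNorm s fun x ↦ ∑' v, (E v).indicator (fun x ↦ (dyadicStep b v x : ℝ≥0∞)) x := by
  have hsm0' : (0 : ℝ) < sm := mod_cast hsm0
  obtain ⟨C, hC1, hC⟩ := exists_lintegral_tsum_dyadicStep_rpow_le hg hsm0 hsm
    (le_max_left 1 σ) fun x ↦ (hsσ x).trans (mod_cast le_max_right 1 σ)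
  refine ⟨C ^ (1 / sm : ℝ), fun b E hE ↦ ?_⟩
  rw [ENNReal.coe_rpow_of_nonneg _ (by positivity)]
  refine luxNorm_le_mul_luxNorm_of_modular hsm0' hsm (mod_cast hC1) coe_ne_top
    fun d hd0 hdt hd ↦ ?_
  lift d to ℝ≥0 using hdt
  have hd0' : d ≠ 0 := mod_cast hd0
  set bd : ℕ → (Fin n → ℤ) → ℝ≥0 := fun v m ↦ b v m / d
  have hstep (v x) : (dyadicStep bd v x : ℝ≥0∞) = dyadicStep b v x * (d : ℝ≥0∞)⁻¹ :=
    ENNReal.coe_div hd0'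
  have hind (v x) : (E v).indicator (fun x ↦ (dyadicStep bd v x : ℝ≥0∞)) x =
      (E v).indicator (fun x ↦ (dyadicStep b v x : ℝ≥0∞)) x * (d : ℝ≥0∞)⁻¹ := by
    by_cases hx : x ∈ E v <;> simp [hx, hstep]
  have hmod := hC bd E hE
  simp only [hind, ENNReal.tsum_mul_right] at hmod
  simp only [hstep, ENNReal.tsum_mul_right] at hmod
  exact hmod hd

end perturbation

/-! ### Carleson norms and factorization -/

/-- The Carleson norm of a sequence of functions: the supremum over the dyadic cubes `Q` of the
mean over `Q` of the sum of the functions of at least the level of `Q`. -/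
def carlesonNorm (g : ℕ → En n → ℝ≥0∞) : ℝ≥0∞ :=
  ⨆ (v : ℤ) (m : Fin n → ℤ), (volume (dyadicCube n v m))⁻¹ *
    ∑' u : ℕ, if v ≤ u then ∫⁻ x in dyadicCube n v m, g u x else 0

/-- The set of points at which the sum of `g` over the levels from `v` on is at most twice the
Carleson norm of `g`. -/
def carlesonSet (g : ℕ → En n → ℝ≥0∞) (v : ℕ) : Set (En n) :=
  {x | ∑' u, (if v ≤ u then g u x else 0) ≤ 2 * carlesonNorm g}

/-- The mean over `Q_{v,m}` of the reciprocal of the sum of `t`. -/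
def reciprocalMean (t : ℕ → (Fin n → ℤ) → ℝ≥0) (v : ℕ) (m : Fin n → ℤ) : ℝ≥0∞ :=
  ⨍⁻ x in dyadicCube n v m, (∑' u, (dyadicStep t u x : ℝ≥0∞))⁻¹ ∂volume

/-- The points at which the reciprocal of the sum of `t` is at most twice its mean over the dyadic
cube of level `v` around the point. -/
def reciprocalMeanSet (t : ℕ → (Fin n → ℤ) → ℝ≥0) (v : ℕ) : Set (En n) :=
  {x | (∑' u, (dyadicStep t u x : ℝ≥0∞))⁻¹ ≤ 2 * reciprocalMean t v (dyadicIndex v x)}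

section carleson

variable {g : ℕ → En n → ℝ≥0∞} {r : En n → ℝ} {κ c : ℝ} {rm σ : ℝ≥0}
  {t : ℕ → (Fin n → ℤ) → ℝ≥0}

lemma carlesonNorm_le_iff {L : ℝ≥0∞} :
    carlesonNorm g ≤ L ↔ ∀ (v : ℤ) (m : Fin n → ℤ),
      (∑' u : ℕ, if v ≤ u then ∫⁻ x in dyadicCube n v m, g u x else 0) ≤
        L * volume (dyadicCube n v m) := by
  simp only [carlesonNorm, iSup_le_iff]
  refine forall₂_congr fun v m ↦ ?_
  rw [mul_comm, ← div_eq_mul_inv, ENNReal.div_le_iff (volume_dyadicCube_ne_zero v m)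
    (volume_dyadicCube_ne_top v m)]

lemma carlesonNorm_le_mul {g' : ℕ → En n → ℝ≥0∞} {k : ℝ≥0∞} (hk : k ≠ ∞)
    (h : ∀ v x, g v x ≤ k * g' v x) : carlesonNorm g ≤ k * carlesonNorm g' := by
  refine carlesonNorm_le_iff.2 fun v m ↦ ?_
  calc (∑' u : ℕ, if v ≤ u then ∫⁻ x in dyadicCube n v m, g u x else 0)
      ≤ ∑' u : ℕ, k * if v ≤ u then ∫⁻ x in dyadicCube n v m, g' u x else 0 := by
        refine ENNReal.tsum_le_tsum fun u ↦ ?_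
        split_ifs
        · rw [← lintegral_const_mul' _ _ hk]
          exact lintegral_mono (h u)
        · exact zero_le
    _ ≤ k * carlesonNorm g' * volume (dyadicCube n v m) := by
        rw [ENNReal.tsum_mul_left, mul_assoc]
        exact mul_le_mul_right (carlesonNorm_le_iff.1 le_rfl v m) k

lemma isHalfDense_carlesonSet (hg : ∀ v, Measurable (g v)) : IsHalfDense (carlesonSet g) := by
  have hterm (v u : ℕ) : Measurable fun x ↦ if v ≤ u then g u x else 0 := by
    split_ifs
    exacts [hg u, measurable_const]
  have htail (v : ℕ) : Measurable fun x ↦ ∑' u, if v ≤ u then g u x else 0 := .tsum (hterm v)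
  refine ⟨fun v ↦ measurableSet_le (htail v) measurable_const, fun v m ↦ ?_⟩
  refine measure_le_two_mul_measure_inter_le (measurableSet_dyadicCube v m)
    (volume_dyadicCube_ne_top v m) (htail v) ?_
  rw [lintegral_tsum fun u ↦ (hterm v u).aemeasurable]
  refine le_trans (ENNReal.tsum_le_tsum fun u ↦ ?_) (carlesonNorm_le_iff.1 le_rfl v m)
  by_cases huv : v ≤ u <;> simp [huv]

lemma tsum_indicator_carlesonSet_le (g : ℕ → En n → ℝ≥0∞) (x : En n) :
    ∑' v, (carlesonSet g v).indicator (g v) x ≤ 2 * carlesonNorm g := by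
  classical
  obtain h | h := em (∃ v, x ∈ carlesonSet g v)
  · refine le_trans (ENNReal.tsum_le_tsum fun v ↦ ?_) (Nat.find_spec h)
    by_cases hv : x ∈ carlesonSet g v
    · rw [indicator_of_mem hv, if_pos (Nat.find_min' h hv)]
    · rw [indicator_of_notMem hv]
      exact zero_le
  · have hzero (v) : (carlesonSet g v).indicator (g v) x = 0 :=
      indicator_of_notMem (fun hv ↦ h ⟨v, hv⟩) _
    simp only [hzero, tsum_zero, zero_le]

lemma tsum_rpow_mul_rpow_le (hκ0 : 0 ≤ κ) (hκ1 : κ ≤ 1) (f g : ℕ → ℝ≥0∞) :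
    ∑' v, f v ^ (1 - κ) * g v ^ κ ≤ (∑' v, f v) ^ (1 - κ) * (∑' v, g v) ^ κ := by
  have hholder := ENNReal.lintegral_mul_norm_pow_le (μ := Measure.count) (f := f) (g := g)
    (measurable_of_countable _).aemeasurable (measurable_of_countable _).aemeasurable
    (sub_nonneg.2 hκ1) hκ0 (sub_add_cancel 1 κ)
  simpa only [lintegral_count, enorm_eq_self] using hholder

lemma tsum_indicator_carlesonSet_dyadicStep_le (hκ0 : 0 ≤ κ) (hκ1 : κ < 1) {M : ℝ≥0}
    {a d : ℕ → (Fin n → ℤ) → ℝ≥0} (h : ∀ v m, t v m ≤ M * (a v m ^ (1 - κ) * d v m ^ κ))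
    (x : En n) :
    ∑' v, (carlesonSet (fun v x ↦ ↑(dyadicStep d v x)) v).indicator
        (fun x ↦ (dyadicStep t v x : ℝ≥0∞)) x ≤
      M * (2 * carlesonNorm fun v x ↦ ↑(dyadicStep d v x)) ^ κ *
        (∑' v, (dyadicStep a v x : ℝ≥0∞)) ^ (1 - κ) := by
  set g : ℕ → En n → ℝ≥0∞ := fun v x ↦ dyadicStep d v x
  have hpoint (v) : (carlesonSet g v).indicator (fun x ↦ (dyadicStep t v x : ℝ≥0∞)) x ≤
      M * ((dyadicStep a v x : ℝ≥0∞) ^ (1 - κ) * (carlesonSet g v).indicator (g v) x ^ κ) := by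
    by_cases hx : x ∈ carlesonSet g v
    · rw [indicator_of_mem hx, indicator_of_mem hx,
        ← ENNReal.coe_rpow_of_nonneg _ (sub_pos.2 hκ1).le, ← ENNReal.coe_rpow_of_nonneg _ hκ0]
      exact_mod_cast h v (dyadicIndex v x)
    · rw [indicator_of_notMem hx]
      exact zero_le
  calc ∑' v, (carlesonSet g v).indicator (fun x ↦ (dyadicStep t v x : ℝ≥0∞)) x
      ≤ M * ∑' v, (dyadicStep a v x : ℝ≥0∞) ^ (1 - κ) * (carlesonSet g v).indicator (g v) x ^ κ :=
        (ENNReal.tsum_le_tsum hpoint).trans_eq ENNReal.tsum_mul_left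
    _ ≤ M * ((∑' v, (dyadicStep a v x : ℝ≥0∞)) ^ (1 - κ) * (2 * carlesonNorm g) ^ κ) := by
        gcongr
        refine (tsum_rpow_mul_rpow_le hκ0 hκ1.le _ _).trans ?_
        gcongr
        exact tsum_indicator_carlesonSet_le g x
    _ = _ := by ring

theorem exists_luxNorm_tsum_dyadicStep_le_mul_carlesonNorm (hr : GlobLogHolder c r)
    (hrm0 : 0 < rm) (hrm : ∀ x, rm ≤ r x) (hrσ : ∀ x, r x ≤ σ) (hκ0 : 0 ≤ κ) (hκ1 : κ < 1) :
    ∃ C : ℝ≥0, ∀ (t a d : ℕ → (Fin n → ℤ) → ℝ≥0) (M : ℝ≥0),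
      (∀ v m, t v m ≤ M * (a v m ^ (1 - κ) * d v m ^ κ)) →
      carlesonNorm (fun v x ↦ ↑(dyadicStep d v x)) ≠ ∞ →
      luxNorm r (fun x ↦ ∑' v, (dyadicStep t v x : ℝ≥0∞)) ≤
        C * (M * (2 * carlesonNorm fun v x ↦ ↑(dyadicStep d v x)) ^ κ *
          luxNorm (fun x ↦ (1 - κ) * r x) (fun x ↦ ∑' v, (dyadicStep a v x : ℝ≥0∞)) ^ (1 - κ)) := by
  obtain ⟨C, hC⟩ := exists_luxNorm_tsum_dyadicStep_le hr hrm0 hrm hrσ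
  refine ⟨C, fun t a d M h hd ↦ ?_⟩
  have hE := isHalfDense_carlesonSet fun v ↦ (measurable_dyadicStep d v).coe_nnreal_ennreal
  rw [← luxNorm_rpow (sub_pos.2 hκ1)]
  refine (hC t _ hE).trans (mul_le_mul_right ?_ _)
  refine luxNorm_le_mul_luxNorm (fun x ↦ lt_of_lt_of_le (mod_cast hrm0) (hrm x)) ?_
    (tsum_indicator_carlesonSet_dyadicStep_le hκ0 hκ1 h)
  exact ENNReal.mul_ne_top coe_ne_top
    (ENNReal.rpow_ne_top_of_nonneg hκ0 (ENNReal.mul_ne_top ofNat_ne_top hd))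

lemma measurable_tsum_dyadicStep (t : ℕ → (Fin n → ℤ) → ℝ≥0) :
    Measurable fun x ↦ ∑' u, (dyadicStep t u x : ℝ≥0∞) :=
  .tsum fun u ↦ (measurable_dyadicStep t u).coe_nnreal_ennreal

lemma reciprocalMean_mul_volume (t : ℕ → (Fin n → ℤ) → ℝ≥0) (v : ℕ) (m : Fin n → ℤ) :
    reciprocalMean t v m * volume (dyadicCube n v m) =
      ∫⁻ x in dyadicCube n v m, (∑' u, (dyadicStep t u x : ℝ≥0∞))⁻¹ := by
  rw [mul_comm, reciprocalMean, measure_mul_setLAverage _ (volume_dyadicCube_ne_top v m)]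

lemma reciprocalMean_ne_zero (ht : ∀ᵐ x : En n, ∑' u, (dyadicStep t u x : ℝ≥0∞) ≠ ∞) (v : ℕ)
    (m : Fin n → ℤ) : reciprocalMean t v m ≠ 0 := fun hzero ↦ by
  have hinv : Measurable fun x ↦ (∑' u, (dyadicStep t u x : ℝ≥0∞))⁻¹ :=
    (measurable_tsum_dyadicStep t).inv
  have hint := reciprocalMean_mul_volume t v m
  rw [hzero, zero_mul, eq_comm, lintegral_eq_zero_iff hinv] at hint
  have hfalse : ∀ᵐ _ : En n ∂volume.restrict (dyadicCube n v m), False := by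
    filter_upwards [hint, ae_restrict_of_ae ht] with x hx hfin
    exact hfin (ENNReal.inv_eq_zero.1 hx)
  rw [Filter.eventually_false_iff_eq_bot, ae_eq_bot, Measure.restrict_eq_zero] at hfalse
  exact volume_dyadicCube_ne_zero v m hfalse

lemma reciprocalMean_ne_top {v : ℕ} {m : Fin n → ℤ} (ht : t v m ≠ 0) :
    reciprocalMean t v m ≠ ∞ := by
  have hint : reciprocalMean t v m * volume (dyadicCube n v m) ≤
      (t v m : ℝ≥0∞)⁻¹ * volume (dyadicCube n v m) := by
    rw [reciprocalMean_mul_volume, ← setLIntegral_const]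
    refine setLIntegral_mono measurable_const fun x hx ↦ ENNReal.inv_le_inv.2 ?_
    rw [← mem_dyadicCube_iff.1 hx]
    exact ENNReal.le_tsum (f := fun u ↦ (dyadicStep t u x : ℝ≥0∞)) v
  rw [ENNReal.mul_le_mul_iff_left (volume_dyadicCube_ne_zero v m) (volume_dyadicCube_ne_top v m)]
    at hint
  exact ne_top_of_le_ne_top (ENNReal.inv_ne_top.2 (mod_cast ht)) hint

lemma isHalfDense_reciprocalMeanSet (t : ℕ → (Fin n → ℤ) → ℝ≥0) :
    IsHalfDense (reciprocalMeanSet t) := by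
  have hinv := (measurable_tsum_dyadicStep t).inv
  refine ⟨fun v ↦ measurableSet_le hinv ?_, fun v m ↦ ?_⟩
  · exact (measurable_of_countable fun m ↦ 2 * reciprocalMean t v m).comp (measurable_dyadicIndex v)
  · have hset : dyadicCube n v m ∩ reciprocalMeanSet t v = dyadicCube n v m ∩
        {x | (∑' u, (dyadicStep t u x : ℝ≥0∞))⁻¹ ≤ 2 * reciprocalMean t v m} := by
      ext x
      refine and_congr_right fun hx ↦ ?_
      rw [reciprocalMeanSet, mem_ofPred_eq, mem_dyadicCube_iff.1 hx, mem_ofPred_eq]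
    rw [hset]
    exact measure_le_two_mul_measure_inter_le (measurableSet_dyadicCube v m)
      (volume_dyadicCube_ne_top v m) hinv (reciprocalMean_mul_volume t v m).ge

lemma setLIntegral_mul_reciprocalMean_le (t : ℕ → (Fin n → ℤ) → ℝ≥0) (u : ℕ) (k : Fin n → ℤ) :
    ∫⁻ x in dyadicCube n u k,
        ↑(dyadicStep (fun v m ↦ t v m * (reciprocalMean t v m).toNNReal) u x) ≤
      ∫⁻ x in dyadicCube n u k, dyadicStep t u x * (∑' w, (dyadicStep t w x : ℝ≥0∞))⁻¹ := by
  have hconst {x : En n} (hx : x ∈ dyadicCube n u k) : dyadicIndex u x = k :=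
    mem_dyadicCube_iff.1 hx
  calc _ = ∫⁻ _ in dyadicCube n u k, ↑(t u k * (reciprocalMean t u k).toNNReal) :=
        setLIntegral_congr_fun (measurableSet_dyadicCube u k) fun x hx ↦ by
          simp only [dyadicStep, hconst hx]
    _ ≤ t u k * ∫⁻ x in dyadicCube n u k, (∑' w, (dyadicStep t w x : ℝ≥0∞))⁻¹ := by
        rw [setLIntegral_const, ← reciprocalMean_mul_volume, ENNReal.coe_mul, mul_assoc]
        gcongr
        exact coe_toNNReal_le_self
    _ = _ := by
        rw [← lintegral_const_mul' _ _ coe_ne_top]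
        exact setLIntegral_congr_fun (measurableSet_dyadicCube u k) fun x hx ↦ by
          simp only [dyadicStep, hconst hx]

lemma carlesonNorm_mul_reciprocalMean_le_one (t : ℕ → (Fin n → ℤ) → ℝ≥0) :
    carlesonNorm (fun v x ↦ ↑(dyadicStep (fun v m ↦ t v m * (reciprocalMean t v m).toNNReal) v x)) ≤
      1 := by
  refine carlesonNorm_le_iff.2 fun v m ↦ ?_
  set F : En n → ℝ≥0∞ := fun x ↦ ∑' u, (dyadicStep t u x : ℝ≥0∞)
  have hmeas (u : ℕ) : AEMeasurable (fun x ↦ dyadicStep t u x * (F x)⁻¹)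
      (volume.restrict (dyadicCube n v m)) :=
    ((measurable_dyadicStep t u).coe_nnreal_ennreal.mul
      (measurable_tsum_dyadicStep t).inv).aemeasurable
  calc _ ≤ ∑' u, ∫⁻ x in dyadicCube n v m, dyadicStep t u x * (F x)⁻¹ := by
        refine ENNReal.tsum_le_tsum fun u ↦ ?_
        split_ifs with hvu
        · exact setLIntegral_dyadicCube_le_of_subcubes hvu
            (setLIntegral_mul_reciprocalMean_le t u) m
        · exact zero_le
    _ = ∫⁻ x in dyadicCube n v m, F x * (F x)⁻¹ := by
        rw [← lintegral_tsum hmeas]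
        simp only [ENNReal.tsum_mul_right, F]
    _ ≤ 1 * volume (dyadicCube n v m) := by
        rw [← setLIntegral_const]
        exact lintegral_mono fun x ↦ ENNReal.mul_inv_le_one _

lemma mul_rpow_neg_rpow_mul_mul_rpow {x y : ℝ≥0} (hκ1 : κ < 1) (hy : x ≠ 0 → y ≠ 0) :
    (x * y ^ (-(κ / (1 - κ)))) ^ (1 - κ) * (x * y) ^ κ = x := by
  have hκ : 1 - κ ≠ 0 := (sub_pos.2 hκ1).ne'
  obtain rfl | hx := eq_or_ne x 0
  · simp only [zero_mul, NNReal.zero_rpow hκ]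
  rw [NNReal.mul_rpow, NNReal.mul_rpow, ← NNReal.rpow_mul, neg_mul, div_mul_cancel₀ _ hκ,
    mul_mul_mul_comm, ← NNReal.rpow_add hx, ← NNReal.rpow_add (hy hx), sub_add_cancel,
    neg_add_cancel, NNReal.rpow_one, NNReal.rpow_zero, mul_one]

lemma tsum_indicator_reciprocalMeanSet_le {A : ℝ} (hA : 0 ≤ A)
    (ht : ∀ᵐ x : En n, ∑' u, (dyadicStep t u x : ℝ≥0∞) ≠ ∞) (x : En n) :
    ∑' v, (reciprocalMeanSet t v).indicator (fun x ↦ (dyadicStep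
        (fun v m ↦ t v m * (reciprocalMean t v m).toNNReal ^ (-A)) v x : ℝ≥0∞)) x ≤
      2 ^ A * (∑' v, (dyadicStep t v x : ℝ≥0∞)) ^ (A + 1) := by
  set F : ℝ≥0∞ := ∑' v, (dyadicStep t v x : ℝ≥0∞)
  have hpoint (v) : (reciprocalMeanSet t v).indicator (fun x ↦ (dyadicStep
      (fun v m ↦ t v m * (reciprocalMean t v m).toNNReal ^ (-A)) v x : ℝ≥0∞)) x ≤
      2 ^ A * F ^ A * dyadicStep t v x := by
    by_cases hx : x ∈ reciprocalMeanSet t v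
    · rw [indicator_of_mem hx]
      simp only [dyadicStep]
      set m := dyadicIndex v x
      obtain h0 | h0 := eq_or_ne (t v m) 0
      · simp only [h0, zero_mul, ENNReal.coe_zero, zero_le]
      have hmean0 := reciprocalMean_ne_zero ht v m
      have hmeant := reciprocalMean_ne_top h0
      have hinv : (reciprocalMean t v m)⁻¹ ≤ 2 * F := by
        rw [ENNReal.inv_le_iff_inv_le, ENNReal.mul_inv (.inl two_ne_zero) (.inl ofNat_ne_top),
          mul_comm, ← div_eq_mul_inv]
        exact ENNReal.div_le_of_le_mul' hx
      rw [ENNReal.coe_mul,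
        ENNReal.coe_rpow_of_ne_zero (ENNReal.toNNReal_ne_zero.2 ⟨hmean0, hmeant⟩),
        ENNReal.coe_toNNReal hmeant, mul_comm, ENNReal.rpow_neg, ← ENNReal.inv_rpow,
        ← ENNReal.mul_rpow_of_nonneg _ _ hA]
      gcongr
    · rw [indicator_of_notMem hx]
      exact zero_le
  calc _ ≤ ∑' v, 2 ^ A * F ^ A * (dyadicStep t v x : ℝ≥0∞) := ENNReal.tsum_le_tsum hpoint
    _ = 2 ^ A * F ^ (A + 1) := by
        rw [ENNReal.tsum_mul_left, ENNReal.rpow_add_of_nonneg _ _ hA zero_le_one,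
          ENNReal.rpow_one, mul_assoc]

-- The factors are `t τ ^ (-κ / (1 - κ))` and `t τ`, where `τ` is the mean over the cube of the
-- reciprocal of the sum of `t`.
theorem exists_factorization_luxNorm_le (hr : GlobLogHolder c r) (hrm0 : 0 < rm)
    (hrm : ∀ x, rm ≤ r x) (hrσ : ∀ x, r x ≤ σ) (hκ0 : 0 ≤ κ) (hκ1 : κ < 1) :
    ∃ C : ℝ≥0, ∀ t : ℕ → (Fin n → ℤ) → ℝ≥0,
      luxNorm r (fun x ↦ ∑' v, (dyadicStep t v x : ℝ≥0∞)) ≠ ∞ →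
      ∃ a d : ℕ → (Fin n → ℤ) → ℝ≥0, (∀ v m, t v m = a v m ^ (1 - κ) * d v m ^ κ) ∧
        luxNorm (fun x ↦ (1 - κ) * r x) (fun x ↦ ∑' v, (dyadicStep a v x : ℝ≥0∞)) ≤
          C * luxNorm r (fun x ↦ ∑' v, (dyadicStep t v x : ℝ≥0∞)) ^ (1 - κ)⁻¹ ∧
        carlesonNorm (fun v x ↦ ↑(dyadicStep d v x)) ≤ 1 := by
  have hκ : 0 < 1 - κ := sub_pos.2 hκ1
  have hr0 (x) : 0 < r x := lt_of_lt_of_le (mod_cast hrm0) (hrm x)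
  set κ' : ℝ≥0 := ⟨1 - κ, hκ.le⟩
  obtain ⟨C, hC⟩ := exists_luxNorm_tsum_dyadicStep_le (sm := κ' * rm) (σ := κ' * σ)
    (hr.const_mul hκ) (mul_pos hκ hrm0) (fun x ↦ mul_le_mul_of_nonneg_left (hrm x) hκ.le)
    fun x ↦ mul_le_mul_of_nonneg_left (hrσ x) hκ.le
  set A := κ / (1 - κ) with hA_def
  have hA : 0 ≤ A := div_nonneg hκ0 hκ.le
  have hA1 : A + 1 = (1 - κ)⁻¹ := by
    rw [hA_def]
    field_simp
    ring
  refine ⟨C * 2 ^ A, fun t ht ↦ ?_⟩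
  have hfin := ae_ne_top_of_luxNorm_ne_top hr0 hr.1.continuous.measurable
    (measurable_tsum_dyadicStep t) ht
  refine ⟨fun v m ↦ t v m * (reciprocalMean t v m).toNNReal ^ (-A),
    fun v m ↦ t v m * (reciprocalMean t v m).toNNReal, fun v m ↦ ?_, ?_,
    carlesonNorm_mul_reciprocalMean_le_one t⟩
  · exact (mul_rpow_neg_rpow_mul_mul_rpow hκ1 fun h0 ↦ ENNReal.toNNReal_ne_zero.2
      ⟨reciprocalMean_ne_zero hfin v m, reciprocalMean_ne_top h0⟩).symm
  · have hlux := luxNorm_rpow (inv_pos.2 hκ) (fun x ↦ (1 - κ) * r x)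
      (fun x ↦ ∑' v, (dyadicStep t v x : ℝ≥0∞))
    simp only [inv_mul_cancel_left₀ hκ.ne'] at hlux
    rw [← hlux, ENNReal.coe_mul, ENNReal.coe_rpow_of_nonneg _ hA, mul_assoc, ← hA1]
    refine (hC _ _ (isHalfDense_reciprocalMeanSet t)).trans (mul_le_mul_right ?_ _)
    exact luxNorm_le_mul_luxNorm (fun x ↦ mul_pos hκ (hr0 x))
      (ENNReal.rpow_ne_top_of_nonneg hA ofNat_ne_top)
      (tsum_indicator_reciprocalMeanSet_le hA hfin)

end carleson

/-! ### Sequence spaces -/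

/-- The weight `2 ^ (v (α(x) + n / 2))` of the sequence spaces. -/
def dyadicWeight (α : En n → ℝ) (v : ℕ) (x : En n) : ℝ≥0 := 2 ^ (v * (α x + n / 2))

/-- The `q`-th power of the function of level `v` whose mixed norm is the norm of `lam`. -/
def weightedPow (α : En n → ℝ) (q : ℝ) (lam : ℕ → (Fin n → ℤ) → ℂ) (v : ℕ) (x : En n) : ℝ≥0 :=
  (dyadicWeight α v x * ‖lam v (dyadicIndex v x)‖₊) ^ q

/-- The coefficients obtained from `weightedPow` by freezing the weight on each dyadic cube at the
corner of the cube. -/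
def coeffPow (α : En n → ℝ) (q : ℝ) (lam : ℕ → (Fin n → ℤ) → ℂ) (v : ℕ) (m : Fin n → ℤ) : ℝ≥0 :=
  (dyadicWeight α v (dyadicCorner v m) * ‖lam v m‖₊) ^ q

section sequence

variable {c q : ℝ} {α p r : En n → ℝ}

lemma dyadicWeight_ne_zero (α : En n → ℝ) (v : ℕ) (x : En n) : dyadicWeight α v x ≠ 0 :=
  (NNReal.rpow_pos two_pos).ne'

lemma LocLogHolder.exists_dyadicWeight_le (hα : LocLogHolder c α) :
    ∃ C : ℝ≥0, ∀ (v : ℕ) (x y : En n), dyadicIndex v x = dyadicIndex v y →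
      dyadicWeight α v x ≤ C * dyadicWeight α v y := by
  obtain ⟨C, -, hloc⟩ := hα.exists_abs_sub_mul_le
  refine ⟨2 ^ C, fun v x y hxy ↦ ?_⟩
  rw [dyadicWeight, dyadicWeight, ← NNReal.rpow_add two_ne_zero]
  refine NNReal.rpow_le_rpow_of_exponent_le one_le_two ?_
  have hdiff : (α x - α y) * v ≤ C := calc
    (α x - α y) * v ≤ |α x - α y| * (v + 1) := by
      gcongr
      exacts [le_abs_self _, (lt_add_one _).le]
    _ ≤ C := hloc v x y hxy
  linear_combination hdiff

lemma LocLogHolder.exists_weightedPow_equiv (hα : LocLogHolder c α) (hq : 0 ≤ q) :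
    ∃ C : ℝ≥0, ∀ (lam : ℕ → (Fin n → ℤ) → ℂ) (v : ℕ) (x : En n),
      weightedPow α q lam v x ≤ C * dyadicStep (coeffPow α q lam) v x ∧
        dyadicStep (coeffPow α q lam) v x ≤ C * weightedPow α q lam v x := by
  obtain ⟨C, hC⟩ := hα.exists_dyadicWeight_le
  refine ⟨C ^ q, fun lam v x ↦ ?_⟩
  have hcorner := dyadicIndex_dyadicCorner v (dyadicIndex v x)
  simp only [weightedPow, dyadicStep, coeffPow, ← NNReal.mul_rpow, ← mul_assoc]
  constructor <;> gcongr
  exacts [hC v _ _ hcorner.symm, hC v _ _ hcorner]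

lemma seqNorm_rpow (hq : 0 < q) (lam : ℕ → (Fin n → ℤ) → ℂ) :
    seqNorm α p (fun _ ↦ q) lam ^ q =
      luxNorm (fun x ↦ q⁻¹ * p x) fun x ↦ ∑' v, (weightedPow α q lam v x : ℝ≥0∞) := by
  have hpoint (v : ℕ) (x : En n) : (∑' m,
      ENNReal.ofReal ((2 : ℝ) ^ ((v : ℝ) * (α x + n / 2)) * ‖lam v m‖) *
        (dyadicCube n (v : ℤ) m).indicator (fun _ ↦ (1 : ℝ≥0∞)) x) ^ q =
      weightedPow α q lam v x := by
    rw [tsum_mul_indicator_dyadicCube v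
      fun m ↦ ENNReal.ofReal ((2 : ℝ) ^ ((v : ℝ) * (α x + n / 2)) * ‖lam v m‖),
      weightedPow, ENNReal.coe_rpow_of_nonneg _ hq.le, ← ENNReal.ofReal_coe_nnreal]
    simp only [dyadicWeight, NNReal.coe_mul, NNReal.coe_rpow, NNReal.coe_ofNat, coe_nnnorm]
  simp only [seqNorm, mixedNorm, hpoint, one_div]
  rw [luxNorm_rpow (inv_pos.2 hq), ENNReal.rpow_inv_rpow hq.ne']

lemma seqNormInf_rpow (hq : 0 < q) (lam : ℕ → (Fin n → ℤ) → ℂ) :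
    seqNormInf α q lam ^ q = carlesonNorm fun v x ↦ ↑(weightedPow α q lam v x) := by
  have hpoint (v : ℕ) (x : En n) : (∑' m,
      ENNReal.ofReal ((2 : ℝ) ^ ((v : ℝ) * (α x + n / 2) * q) * ‖lam v m‖ ^ q) *
        (dyadicCube n (v : ℤ) m).indicator (fun _ ↦ (1 : ℝ≥0∞)) x) =
      weightedPow α q lam v x := by
    rw [tsum_mul_indicator_dyadicCube v
      fun m ↦ ENNReal.ofReal ((2 : ℝ) ^ ((v : ℝ) * (α x + n / 2) * q) * ‖lam v m‖ ^ q),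
      weightedPow, ← ENNReal.ofReal_coe_nnreal]
    simp only [dyadicWeight, NNReal.mul_rpow, NNReal.rpow_mul, NNReal.coe_mul, NNReal.coe_rpow,
      NNReal.coe_ofNat, coe_nnnorm, Real.rpow_mul zero_le_two]
  simp only [seqNormInf, carlesonNorm, hpoint]
  rw [← ENNReal.orderIsoRpow_apply q hq]
  simp only [OrderIso.map_iSup, ENNReal.orderIsoRpow_apply, ENNReal.mul_rpow_of_nonneg _ _ hq.le,
    ← ENNReal.rpow_mul, neg_mul, one_div, inv_mul_cancel₀ hq.ne', ENNReal.rpow_neg_one,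
    ENNReal.rpow_one]

lemma LocLogHolder.exists_seqNorm_rpow_equiv (hα : LocLogHolder c α) (hq : 0 < q)
    (hr : ∀ x, 0 < r x) :
    ∃ C : ℝ≥0, ∀ lam : ℕ → (Fin n → ℤ) → ℂ,
      seqNorm α (fun x ↦ q * r x) (fun _ ↦ q) lam ^ q ≤
          C * luxNorm r (fun x ↦ ∑' v, (dyadicStep (coeffPow α q lam) v x : ℝ≥0∞)) ∧
        luxNorm r (fun x ↦ ∑' v, (dyadicStep (coeffPow α q lam) v x : ℝ≥0∞)) ≤
          C * seqNorm α (fun x ↦ q * r x) (fun _ ↦ q) lam ^ q := by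
  obtain ⟨C, hC⟩ := hα.exists_weightedPow_equiv hq.le
  refine ⟨C, fun lam ↦ ?_⟩
  simp only [seqNorm_rpow hq, inv_mul_cancel_left₀ hq.ne']
  constructor <;> refine luxNorm_le_mul_luxNorm hr coe_ne_top fun x ↦ ?_ <;>
    rw [← ENNReal.tsum_mul_left] <;> refine ENNReal.tsum_le_tsum fun v ↦ ?_
  exacts [mod_cast (hC lam v x).1, mod_cast (hC lam v x).2]

lemma LocLogHolder.exists_seqNormInf_rpow_equiv (hα : LocLogHolder c α) (hq : 0 < q) :
    ∃ C : ℝ≥0, ∀ lam : ℕ → (Fin n → ℤ) → ℂ,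
      seqNormInf α q lam ^ q ≤
          C * carlesonNorm (fun v x ↦ ↑(dyadicStep (coeffPow α q lam) v x)) ∧
        carlesonNorm (fun v x ↦ ↑(dyadicStep (coeffPow α q lam) v x)) ≤
          C * seqNormInf α q lam ^ q := by
  obtain ⟨C, hC⟩ := hα.exists_weightedPow_equiv hq.le
  refine ⟨C, fun lam ↦ ?_⟩
  rw [seqNormInf_rpow hq]
  constructor <;> refine carlesonNorm_le_mul coe_ne_top fun v x ↦ ?_
  exacts [mod_cast (hC lam v x).1, mod_cast (hC lam v x).2]

lemma weightedPow_smul (k : ℝ≥0) (lam : ℕ → (Fin n → ℤ) → ℂ) (v : ℕ) (x : En n) :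
    weightedPow α q ((k : ℝ) • lam) v x = k ^ q * weightedPow α q lam v x := by
  simp only [weightedPow, Pi.smul_apply, nnnorm_smul, NNReal.nnnorm_eq, ← NNReal.mul_rpow,
    mul_left_comm]

lemma seqNorm_smul_le (hq : 0 < q) (hp : ∀ x, 0 < p x) (k : ℝ≥0) (lam : ℕ → (Fin n → ℤ) → ℂ) :
    seqNorm α p (fun _ ↦ q) ((k : ℝ) • lam) ≤ k * seqNorm α p (fun _ ↦ q) lam := by
  rw [← ENNReal.rpow_le_rpow_iff hq, ENNReal.mul_rpow_of_nonneg _ _ hq.le, seqNorm_rpow hq,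
    seqNorm_rpow hq, ← ENNReal.coe_rpow_of_nonneg _ hq.le]
  refine luxNorm_le_mul_luxNorm (fun x ↦ mul_pos (inv_pos.2 hq) (hp x)) coe_ne_top fun x ↦ ?_
  simp only [weightedPow_smul, ENNReal.coe_mul, ENNReal.tsum_mul_left, le_refl]

lemma seqNormInf_smul_le (hq : 0 < q) (k : ℝ≥0) (lam : ℕ → (Fin n → ℤ) → ℂ) :
    seqNormInf α q ((k : ℝ) • lam) ≤ k * seqNormInf α q lam := by
  rw [← ENNReal.rpow_le_rpow_iff hq, ENNReal.mul_rpow_of_nonneg _ _ hq.le, seqNormInf_rpow hq,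
    seqNormInf_rpow hq, ← ENNReal.coe_rpow_of_nonneg _ hq.le]
  refine carlesonNorm_le_mul coe_ne_top fun v x ↦ ?_
  rw [weightedPow_smul, ENNReal.coe_mul]

lemma exists_coeffPow_eq (hq : q ≠ 0) (α : En n → ℝ) (a : ℕ → (Fin n → ℤ) → ℝ≥0) :
    ∃ lam, coeffPow α q lam = a := by
  refine ⟨fun v m ↦
    (((dyadicWeight α v (dyadicCorner v m))⁻¹ * a v m ^ q⁻¹ : ℝ≥0) : ℝ), ?_⟩
  ext v m
  rw [coeffPow, Complex.nnnorm_real, NNReal.nnnorm_eq,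
    mul_inv_cancel_left₀ (dyadicWeight_ne_zero α v _), NNReal.rpow_inv_rpow hq]

end sequence

/-! ### Calderón products -/

section calderon

variable {c c₀ c₁ cα θ κ q₀ q₁ q : ℝ} {α₀ α₁ α r : En n → ℝ} {rm σ : ℝ≥0}
  {N₀ N₁ : (ℕ → (Fin n → ℤ) → ℂ) → ℝ≥0∞}

lemma calderonNorm_le (hN₀ : ∀ (k : ℝ≥0) μ, N₀ ((k : ℝ) • μ) ≤ k * N₀ μ)
    (hN₁ : ∀ (k : ℝ≥0) ν, N₁ ((k : ℝ) • ν) ≤ k * N₁ ν) {A B : ℝ≥0} (hA : A ≠ 0) (hB : B ≠ 0)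
    {lam μ ν : ℕ → (Fin n → ℤ) → ℂ} (hμ : N₀ μ ≤ A) (hν : N₁ ν ≤ B)
    (h : ∀ v m, ‖lam v m‖₊ ≤ ‖μ v m‖₊ ^ (1 - θ) * ‖ν v m‖₊ ^ θ) (hθ : θ ∈ Set.Icc 0 1) :
    calderonNorm N₀ N₁ θ lam ≤ ↑(A ^ (1 - θ) * B ^ θ) := by
  refine sInf_le ⟨((A⁻¹ : ℝ≥0) : ℝ) • μ, ((B⁻¹ : ℝ≥0) : ℝ) • ν, ?_, ?_, fun v m ↦ ?_⟩
  · refine (hN₀ _ _).trans ((mul_le_mul_right hμ _).trans_eq ?_)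
    rw [← ENNReal.coe_mul, inv_mul_cancel₀ hA, ENNReal.coe_one]
  · refine (hN₁ _ _).trans ((mul_le_mul_right hν _).trans_eq ?_)
    rw [← ENNReal.coe_mul, inv_mul_cancel₀ hB, ENNReal.coe_one]
  · have hcancel {C z : ℝ≥0} (hC : C ≠ 0) (s : ℝ) : C ^ s * (C⁻¹ * z) ^ s = z ^ s := by
      rw [← NNReal.mul_rpow, mul_inv_cancel_left₀ hC]
    simp only [Pi.smul_apply, ofReal_norm, enorm_eq_nnnorm, nnnorm_smul,
      NNReal.nnnorm_eq, ← ENNReal.coe_rpow_of_nonneg _ hθ.1,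
      ← ENNReal.coe_rpow_of_nonneg _ (sub_nonneg.2 hθ.2)]
    norm_cast
    calc ‖lam v m‖₊ ≤ ‖μ v m‖₊ ^ (1 - θ) * ‖ν v m‖₊ ^ θ := h v m
      _ = _ := by
        rw [← hcancel hA (1 - θ), ← hcancel hB θ]
        ring

lemma dyadicWeight_eq_mul_rpow (hα : ∀ x, α x = (1 - θ) * α₀ x + θ * α₁ x) (v : ℕ) (x : En n) :
    dyadicWeight α v x = dyadicWeight α₀ v x ^ (1 - θ) * dyadicWeight α₁ v x ^ θ := by
  rw [dyadicWeight, dyadicWeight, dyadicWeight, ← NNReal.rpow_mul, ← NNReal.rpow_mul,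
    ← NNReal.rpow_add two_ne_zero, hα]
  ring_nf

lemma coeffPow_le_iff (hα : ∀ x, α x = (1 - θ) * α₀ x + θ * α₁ x) (hq : 0 < q)
    (hκ₀ : q₀ * (1 - κ) = (1 - θ) * q) (hκ₁ : q₁ * κ = θ * q) {lam μ ν : ℕ → (Fin n → ℤ) → ℂ}
    {v : ℕ} {m : Fin n → ℤ} {M : ℝ≥0} :
    coeffPow α q lam v m ≤
        M ^ q * (coeffPow α₀ q₀ μ v m ^ (1 - κ) * coeffPow α₁ q₁ ν v m ^ κ) ↔
      ‖lam v m‖₊ ≤ M * (‖μ v m‖₊ ^ (1 - θ) * ‖ν v m‖₊ ^ θ) := by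
  set x : En n := dyadicCorner v m
  have hw : 0 < dyadicWeight α v x := pos_iff_ne_zero.2 (dyadicWeight_ne_zero α v x)
  have hprod : M ^ q * (coeffPow α₀ q₀ μ v m ^ (1 - κ) * coeffPow α₁ q₁ ν v m ^ κ) =
      (dyadicWeight α v x * (M * (‖μ v m‖₊ ^ (1 - θ) * ‖ν v m‖₊ ^ θ))) ^ q := by
    rw [coeffPow, coeffPow, ← NNReal.rpow_mul, ← NNReal.rpow_mul, hκ₀, hκ₁, NNReal.rpow_mul,
      NNReal.rpow_mul, dyadicWeight_eq_mul_rpow hα]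
    simp only [NNReal.mul_rpow]
    ring
  rw [hprod, coeffPow, NNReal.rpow_le_rpow_iff hq, mul_le_mul_iff_right₀ hw]

theorem exists_seqNorm_le_mul_of_nnnorm_le (hr : GlobLogHolder c r) (hrm0 : 0 < rm)
    (hrm : ∀ x, rm ≤ r x) (hrσ : ∀ x, r x ≤ σ) (hα₀ : LocLogHolder c₀ α₀)
    (hα₁ : LocLogHolder c₁ α₁) (hαloc : LocLogHolder cα α)
    (hα : ∀ x, α x = (1 - θ) * α₀ x + θ * α₁ x) (hq₀ : 0 < q₀) (hq₁ : 0 < q₁) (hq : 0 < q)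
    (hκ₀ : q₀ * (1 - κ) = (1 - θ) * q) (hκ₁ : q₁ * κ = θ * q) (hκ : κ ∈ Set.Ico 0 1) :
    ∃ C : ℝ≥0, ∀ (lam μ ν : ℕ → (Fin n → ℤ) → ℂ) (M : ℝ≥0),
      seqNorm α₀ (fun x ↦ q₀ * ((1 - κ) * r x)) (fun _ ↦ q₀) μ ≤ 1 → seqNormInf α₁ q₁ ν ≤ 1 →
      (∀ v m, ‖lam v m‖₊ ≤ M * (‖μ v m‖₊ ^ (1 - θ) * ‖ν v m‖₊ ^ θ)) →
      seqNorm α (fun x ↦ q * r x) (fun _ ↦ q) lam ≤ C * M := by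
  have hκ' : 0 < 1 - κ := sub_pos.2 hκ.2
  have hr0 (x) : 0 < r x := lt_of_lt_of_le (mod_cast hrm0) (hrm x)
  obtain ⟨C₀, hC₀⟩ := hα₀.exists_seqNorm_rpow_equiv hq₀ fun x ↦ mul_pos hκ' (hr0 x)
  obtain ⟨C₁, hC₁⟩ := hα₁.exists_seqNormInf_rpow_equiv hq₁
  obtain ⟨C, hC⟩ := hαloc.exists_seqNorm_rpow_equiv hq hr0
  obtain ⟨D, hD⟩ := exists_luxNorm_tsum_dyadicStep_le_mul_carlesonNorm hr hrm0 hrm hrσ hκ.1 hκ.2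
  set K : ℝ≥0 := C * (D * ((2 * C₁) ^ κ * C₀ ^ (1 - κ)))
  refine ⟨K ^ q⁻¹, fun lam μ ν M hμ hν hle ↦ ?_⟩
  have hnormμ := (hC₀ μ).2.trans (mul_le_of_le_one_right' (ENNReal.rpow_le_one hμ hq₀.le))
  have hnormν := (hC₁ ν).2.trans (mul_le_of_le_one_right' (ENNReal.rpow_le_one hν hq₁.le))
  rw [← ENNReal.rpow_le_rpow_iff hq]
  calc seqNorm α (fun x ↦ q * r x) (fun _ ↦ q) lam ^ q
      ≤ C * luxNorm r (fun x ↦ ∑' v, (dyadicStep (coeffPow α q lam) v x : ℝ≥0∞)) := (hC lam).1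
    _ ≤ C * (D * (↑(M ^ q) * (2 * C₁) ^ κ * C₀ ^ (1 - κ))) := by
        gcongr
        refine (hD _ _ _ (M ^ q) (fun v m ↦ (coeffPow_le_iff hα hq hκ₀ hκ₁).2 (hle v m))
          (ne_top_of_le_ne_top coe_ne_top hnormν)).trans ?_
        have := hκ.1
        gcongr
    _ = (↑(K ^ q⁻¹) * M) ^ q := by
        rw [← ENNReal.coe_mul, ← ENNReal.coe_rpow_of_nonneg _ hq.le, NNReal.mul_rpow,
          NNReal.rpow_inv_rpow hq.ne', ← ENNReal.coe_rpow_of_nonneg _ hκ'.le,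
          show (2 * C₁ : ℝ≥0∞) = ↑(2 * C₁) from rfl, ← ENNReal.coe_rpow_of_nonneg _ hκ.1]
        norm_cast
        ring

theorem exists_factorization_seqNorm_le (hr : GlobLogHolder c r) (hrm0 : 0 < rm)
    (hrm : ∀ x, rm ≤ r x) (hrσ : ∀ x, r x ≤ σ) (hα₀ : LocLogHolder c₀ α₀)
    (hα₁ : LocLogHolder c₁ α₁) (hαloc : LocLogHolder cα α)
    (hα : ∀ x, α x = (1 - θ) * α₀ x + θ * α₁ x) (hq₀ : 0 < q₀) (hq₁ : 0 < q₁) (hq : 0 < q)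
    (hκ₀ : q₀ * (1 - κ) = (1 - θ) * q) (hκ₁ : q₁ * κ = θ * q) (hκ : κ ∈ Set.Ico 0 1) :
    ∃ A B : ℝ≥0, ∀ lam : ℕ → (Fin n → ℤ) → ℂ,
      seqNorm α (fun x ↦ q * r x) (fun _ ↦ q) lam ≠ ∞ →
      ∃ μ ν : ℕ → (Fin n → ℤ) → ℂ,
        (∀ v m, ‖lam v m‖₊ ≤ ‖μ v m‖₊ ^ (1 - θ) * ‖ν v m‖₊ ^ θ) ∧
        seqNorm α₀ (fun x ↦ q₀ * ((1 - κ) * r x)) (fun _ ↦ q₀) μ ^ (1 - θ) ≤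
          A * seqNorm α (fun x ↦ q * r x) (fun _ ↦ q) lam ∧
        seqNormInf α₁ q₁ ν ≤ B := by
  have hκ' : 0 < 1 - κ := sub_pos.2 hκ.2
  have hr0 (x) : 0 < r x := lt_of_lt_of_le (mod_cast hrm0) (hrm x)
  obtain ⟨C₀, hC₀⟩ := hα₀.exists_seqNorm_rpow_equiv hq₀ fun x ↦ mul_pos hκ' (hr0 x)
  obtain ⟨C₁, hC₁⟩ := hα₁.exists_seqNormInf_rpow_equiv hq₁
  obtain ⟨C, hC⟩ := hαloc.exists_seqNorm_rpow_equiv hq hr0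
  obtain ⟨D, hD⟩ := exists_factorization_luxNorm_le hr hrm0 hrm hrσ hκ.1 hκ.2
  set K : ℝ≥0 := (C₀ * D) ^ (1 - κ) * C
  refine ⟨K ^ q⁻¹, C₁ ^ q₁⁻¹, fun lam hlam ↦ ?_⟩
  set S := seqNorm α (fun x ↦ q * r x) (fun _ ↦ q) lam
  have hnorm : luxNorm r (fun x ↦ ∑' v, (dyadicStep (coeffPow α q lam) v x : ℝ≥0∞)) ≤ C * S ^ q :=
    (hC lam).2
  obtain ⟨a, d, hfac, ha, hd⟩ := hD (coeffPow α q lam) <| ne_top_of_le_ne_top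
    (ENNReal.mul_ne_top coe_ne_top (ENNReal.rpow_ne_top_of_nonneg hq.le hlam)) hnorm
  obtain ⟨μ, rfl⟩ := exists_coeffPow_eq hq₀.ne' α₀ a
  obtain ⟨ν, rfl⟩ := exists_coeffPow_eq hq₁.ne' α₁ d
  refine ⟨μ, ν, fun v m ↦ ?_, ?_, ?_⟩
  · simpa only [one_mul] using (coeffPow_le_iff (M := 1) hα hq hκ₀ hκ₁).1
      (by rw [NNReal.one_rpow, one_mul, hfac])
  · set N := seqNorm α₀ (fun x ↦ q₀ * ((1 - κ) * r x)) (fun _ ↦ q₀) μ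
    have hN : N ^ q₀ ≤ C₀ * (D * (C * S ^ q) ^ (1 - κ)⁻¹) :=
      (hC₀ μ).1.trans (mul_le_mul_right (ha.trans (by gcongr)) _)
    rw [← ENNReal.rpow_le_rpow_iff hq]
    calc (N ^ (1 - θ)) ^ q = (N ^ q₀) ^ (1 - κ) := by
          rw [← ENNReal.rpow_mul, ← ENNReal.rpow_mul, hκ₀]
      _ ≤ (C₀ * (D * (C * S ^ q) ^ (1 - κ)⁻¹)) ^ (1 - κ) := by gcongr
      _ = (↑(K ^ q⁻¹) * S) ^ q := by
          rw [← mul_assoc, ENNReal.mul_rpow_of_nonneg _ _ hκ'.le, ENNReal.rpow_inv_rpow hκ'.ne',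
            ENNReal.mul_rpow_of_nonneg _ _ hq.le, ← ENNReal.coe_rpow_of_nonneg _ hq.le,
            NNReal.rpow_inv_rpow hq.ne', ENNReal.coe_mul, ENNReal.coe_rpow_of_nonneg _ hκ'.le,
            ENNReal.coe_mul, mul_assoc]
  · rw [ENNReal.coe_rpow_of_nonneg _ (inv_pos.2 hq₁).le, ENNReal.le_rpow_inv_iff hq₁]
    exact (hC₁ ν).1.trans (mul_le_of_le_one_right' hd)

lemma le_mul_calderonNorm {L : ℝ≥0∞} {C : ℝ≥0} (hC : C ≠ 0) {lam : ℕ → (Fin n → ℤ) → ℂ}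
    (hθ : θ ∈ Set.Icc 0 1)
    (h : ∀ μ ν (M : ℝ≥0), N₀ μ ≤ 1 → N₁ ν ≤ 1 →
      (∀ v m, ‖lam v m‖₊ ≤ M * (‖μ v m‖₊ ^ (1 - θ) * ‖ν v m‖₊ ^ θ)) → L ≤ C * M) :
    L ≤ C * calderonNorm N₀ N₁ θ lam := by
  rw [← ENNReal.div_le_iff' (mod_cast hC) coe_ne_top]
  refine le_sInf ?_
  rintro M ⟨μ, ν, hμ, hν, hle⟩
  obtain rfl | hM := eq_or_ne M ∞
  · exact le_top
  lift M to ℝ≥0 using hM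
  rw [ENNReal.div_le_iff' (mod_cast hC) coe_ne_top]
  refine h μ ν M hμ hν fun v m ↦ ?_
  have hvm := hle v m
  simp only [ofReal_norm, enorm_eq_nnnorm, mul_assoc, ← ENNReal.coe_rpow_of_nonneg _ hθ.1,
    ← ENNReal.coe_rpow_of_nonneg _ (sub_nonneg.2 hθ.2)] at hvm
  exact_mod_cast hvm

lemma calderonNorm_le_mul (hN₀ : ∀ (k : ℝ≥0) μ, N₀ ((k : ℝ) • μ) ≤ k * N₀ μ)
    (hN₁ : ∀ (k : ℝ≥0) ν, N₁ ((k : ℝ) • ν) ≤ k * N₁ ν) (hθ : θ ∈ Set.Ioo 0 1) {A B : ℝ≥0}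
    {L : ℝ≥0∞} {lam μ ν : ℕ → (Fin n → ℤ) → ℂ}
    (h : ∀ v m, ‖lam v m‖₊ ≤ ‖μ v m‖₊ ^ (1 - θ) * ‖ν v m‖₊ ^ θ)
    (hμ : N₀ μ ^ (1 - θ) ≤ A * L) (hν : N₁ ν ≤ B) :
    calderonNorm N₀ N₁ θ lam ≤ ↑((A + 1) * (B + 1) ^ θ) * L := by
  have hθ' : 0 < 1 - θ := sub_pos.2 hθ.2
  have hB : (B + 1) ^ θ ≠ 0 := (NNReal.rpow_pos (by positivity)).ne'
  have hAB : (A + 1) * (B + 1) ^ θ ≠ 0 := mul_ne_zero (by positivity) hB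
  rw [← ENNReal.div_le_iff' (mod_cast hAB) coe_ne_top]
  refine le_of_forall_gt_imp_ge_of_dense fun K hK ↦ ?_
  obtain rfl | hKt := eq_or_ne K ∞
  · exact le_top
  lift K to ℝ≥0 using hKt
  have hK0 : 0 < K := by exact_mod_cast zero_le.trans_lt hK
  rw [ENNReal.div_le_iff' (mod_cast hAB) coe_ne_top]
  have hμK : N₀ μ ≤ ↑(((A + 1) * K) ^ (1 - θ)⁻¹) := by
    rw [ENNReal.coe_rpow_of_nonneg _ (inv_pos.2 hθ').le, ENNReal.le_rpow_inv_iff hθ',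
      ENNReal.coe_mul]
    exact hμ.trans (mul_le_mul' (mod_cast (lt_add_one A).le) hK.le)
  have hνB : N₁ ν ≤ ↑(B + 1) := hν.trans (mod_cast (lt_add_one B).le)
  refine (calderonNorm_le hN₀ hN₁ (NNReal.rpow_pos (by positivity)).ne' (by positivity) hμK hνB h
    ⟨hθ.1.le, hθ.2.le⟩).trans_eq ?_
  rw [NNReal.rpow_inv_rpow hθ'.ne', ← ENNReal.coe_mul]
  ring_nf

theorem exists_calderonNorm_equiv (hr : GlobLogHolder c r) (hrm0 : 0 < rm)
    (hrm : ∀ x, rm ≤ r x) (hrσ : ∀ x, r x ≤ σ) (hα₀ : LocLogHolder c₀ α₀)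
    (hα₁ : LocLogHolder c₁ α₁) (hα : ∀ x, α x = (1 - θ) * α₀ x + θ * α₁ x)
    (hθ : θ ∈ Set.Ioo 0 1) (hq₀ : 0 < q₀) (hq₁ : 0 < q₁) (hq : 0 < q)
    (hκ₀ : q₀ * (1 - κ) = (1 - θ) * q) (hκ₁ : q₁ * κ = θ * q) (hκ : κ ∈ Set.Ico 0 1) :
    ∃ C D : ℝ≥0, 0 < C ∧ 0 < D ∧ ∀ lam : ℕ → (Fin n → ℤ) → ℂ,
      seqNorm α (fun x ↦ q * r x) (fun _ ↦ q) lam ≤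
          C * calderonNorm (seqNorm α₀ (fun x ↦ q₀ * ((1 - κ) * r x)) fun _ ↦ q₀)
            (seqNormInf α₁ q₁) θ lam ∧
        calderonNorm (seqNorm α₀ (fun x ↦ q₀ * ((1 - κ) * r x)) fun _ ↦ q₀)
            (seqNormInf α₁ q₁) θ lam ≤ D * seqNorm α (fun x ↦ q * r x) (fun _ ↦ q) lam := by
  have hp₀ (x) : 0 < q₀ * ((1 - κ) * r x) :=
    mul_pos hq₀ (mul_pos (sub_pos.2 hκ.2) (lt_of_lt_of_le (mod_cast hrm0) (hrm x)))
  have hαloc : LocLogHolder ((1 - θ) * c₀ + θ * c₁) α := by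
    rw [funext hα]
    exact (hα₀.const_mul (sub_pos.2 hθ.2)).add (hα₁.const_mul hθ.1)
  obtain ⟨C, hC⟩ := exists_seqNorm_le_mul_of_nnnorm_le hr hrm0 hrm hrσ hα₀ hα₁ hαloc hα hq₀ hq₁ hq
    hκ₀ hκ₁ hκ
  obtain ⟨A, B, hAB⟩ := exists_factorization_seqNorm_le hr hrm0 hrm hrσ hα₀ hα₁ hαloc hα hq₀ hq₁ hq
    hκ₀ hκ₁ hκ
  have hD : 0 < (A + 1) * (B + 1) ^ θ := mul_pos (by positivity) (NNReal.rpow_pos (by positivity))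
  refine ⟨C + 1, (A + 1) * (B + 1) ^ θ, by positivity, hD, fun lam ↦ ⟨?_, ?_⟩⟩
  · refine le_mul_calderonNorm (by positivity) ⟨hθ.1.le, hθ.2.le⟩ fun μ ν M hμ hν hle ↦ ?_
    exact (hC lam μ ν M hμ hν hle).trans (mul_le_mul_left (mod_cast (lt_add_one C).le) _)
  · obtain hS | hS := eq_or_ne (seqNorm α (fun x ↦ q * r x) (fun _ ↦ q) lam) ∞
    · rw [hS, ENNReal.mul_top (mod_cast hD.ne')]
      exact le_top
    obtain ⟨μ, ν, hle, hμ, hν⟩ := hAB lam hS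
    exact calderonNorm_le_mul (seqNorm_smul_le hq₀ hp₀) (seqNormInf_smul_le hq₁) hθ hle hμ hν

lemma exists_interpolation_parameter (hθ : θ ∈ Set.Ioo 0 1) (hq₀ : 0 < q₀) (hq₁ : 0 < q₁)
    (hq : 1 / q = (1 - θ) / q₀ + θ / q₁) :
    0 < q ∧ ∃ κ ∈ Set.Ico (0 : ℝ) 1, q₀ * (1 - κ) = (1 - θ) * q ∧ q₁ * κ = θ * q := by
  obtain ⟨hθ0, hθ1⟩ := hθ
  have := sub_pos.2 hθ1
  have hq0 : 0 < q := one_div_pos.1 (hq ▸ by positivity)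
  have hκ : 1 - θ * q / q₁ = (1 - θ) * q / q₀ := by
    field_simp at hq ⊢
    linear_combination hq
  refine ⟨hq0, θ * q / q₁, ⟨by positivity, sub_pos.1 (hκ ▸ by positivity)⟩, ?_, ?_⟩
  · rw [hκ, mul_div_cancel₀ _ hq₀.ne']
  · rw [mul_div_cancel₀ _ hq₁.ne']

end calderon

end

theorem stmt11_general {n : ℕ} (θ : ℝ) (hθ : θ ∈ Set.Ioo (0 : ℝ) 1)
    (q₀ q₁ q : ℝ) (hq₀ : 0 < q₀) (hq₁ : 0 < q₁)
    (p₀ α₀ α₁ p α : En n → ℝ)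
    (hp₀ : ∃ c, GlobLogHolder c p₀)
    (hp₀b : ∃ a b : ℝ, 0 < a ∧ ∀ x, a ≤ p₀ x ∧ p₀ x ≤ b)
    (hα₀ : ∃ c, LocLogHolder c α₀) (hα₁ : ∃ c, LocLogHolder c α₁)
    (hp : ∀ x, 1 / p x = (1 - θ) / p₀ x)
    (hq : 1 / q = (1 - θ) / q₀ + θ / q₁)
    (hα : ∀ x, α x = (1 - θ) * α₀ x + θ * α₁ x) :
    ∃ c₁ c₂ : ℝ, 0 < c₁ ∧ 0 < c₂ ∧ ∀ lam : ℕ → (Fin n → ℤ) → ℂ,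
      ENNReal.ofReal c₁ * seqNorm α p (fun _ ↦ q) lam ≤
          calderonNorm (seqNorm α₀ p₀ fun _ ↦ q₀) (seqNormInf α₁ q₁) θ lam ∧
        calderonNorm (seqNorm α₀ p₀ fun _ ↦ q₀) (seqNormInf α₁ q₁) θ lam ≤
          ENNReal.ofReal c₂ * seqNorm α p (fun _ ↦ q) lam := by
  obtain ⟨cp, hp₀⟩ := hp₀
  obtain ⟨a, b, ha, hab⟩ := hp₀b
  obtain ⟨c₀, hα₀⟩ := hα₀
  obtain ⟨c₁, hα₁⟩ := hα₁
  obtain ⟨hq0, κ, hκ, hκ₀, hκ₁⟩ := exists_interpolation_parameter hθ hq₀ hq₁ hq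
  have hθ' : 0 < 1 - θ := sub_pos.2 hθ.2
  set k : ℝ := ((1 - θ) * q)⁻¹ with hk_def
  have hk : 0 < k := by positivity
  have hp_eq : p = fun x ↦ q * (k * p₀ x) := funext fun x ↦ by
    rw [← one_div_one_div (p x), hp x, hk_def]
    field_simp
  have hp₀_eq : p₀ = fun x ↦ q₀ * ((1 - κ) * (k * p₀ x)) := funext fun x ↦ by
    rw [← mul_assoc, hκ₀, mul_inv_cancel_left₀ (by positivity)]
  obtain ⟨C, D, hC, hD, hequiv⟩ := exists_calderonNorm_equiv (hp₀.const_mul hk)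
    (Real.toNNReal_pos.2 (mul_pos hk ha))
    (fun x ↦ (Real.coe_toNNReal _ (mul_pos hk ha).le).trans_le
      (mul_le_mul_of_nonneg_left (hab x).1 hk.le))
    (fun x ↦ (mul_le_mul_of_nonneg_left (hab x).2 hk.le).trans (Real.le_coe_toNNReal _))
    hα₀ hα₁ hα hθ hq₀ hq₁ hq0 hκ₀ hκ₁ hκ
  rw [← hp_eq, ← hp₀_eq] at hequiv
  refine ⟨(C⁻¹ : ℝ≥0), D, inv_pos.2 hC, hD, fun lam ↦ ⟨?_, ?_⟩⟩
  · rw [ENNReal.ofReal_coe_nnreal, ENNReal.coe_inv hC.ne', ENNReal.inv_mul_le_iff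
      (mod_cast hC.ne') coe_ne_top]
    exact (hequiv lam).1
  · rw [ENNReal.ofReal_coe_nnreal]
    exact (hequiv lam).2

/-- Theorem `calderon-prod2`: the Calderón product
`(f^{α₀(·)}_{p₀(·),q₀})^{1−θ}·(f^{α₁(·)}_{∞,q₁})^θ = f^{α(·)}_{p(·),q}`
with equivalent norms. -/
theorem stmt11 {n : ℕ} (θ : ℝ) (hθ : θ ∈ Set.Ioo (0 : ℝ) 1)
    (q₀ q₁ q : ℝ) (hq₀ : 1 ≤ q₀) (hq₁ : 1 ≤ q₁)
    (p₀ α₀ α₁ p α : En n → ℝ)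
    (hp₀ : ∃ c, GlobLogHolder c p₀)
    (hp₀b : ∃ b : ℝ, ∀ x, 1 ≤ p₀ x ∧ p₀ x ≤ b)
    (hα₀ : ∃ c, LocLogHolder c α₀) (hα₁ : ∃ c, LocLogHolder c α₁)
    (hp : ∀ x, 1 / p x = (1 - θ) / p₀ x)
    (hq : 1 / q = (1 - θ) / q₀ + θ / q₁)
    (hα : ∀ x, α x = (1 - θ) * α₀ x + θ * α₁ x) :
    ∃ c₁ c₂ : ℝ, 0 < c₁ ∧ 0 < c₂ ∧ ∀ lam : ℕ → (Fin n → ℤ) → ℂ,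
      ENNReal.ofReal c₁ * seqNorm α p (fun _ => q) lam ≤
          calderonNorm (seqNorm α₀ p₀ fun _ => q₀) (seqNormInf α₁ q₁) θ lam ∧
        calderonNorm (seqNorm α₀ p₀ fun _ => q₀) (seqNormInf α₁ q₁) θ lam ≤
          ENNReal.ofReal c₂ * seqNorm α p (fun _ => q) lam := by
  obtain ⟨b, hb⟩ := hp₀b
  exact stmt11_general θ hθ q₀ q₁ q (by linarith) (by linarith) p₀ α₀ α₁ p α hp₀
    ⟨1, b, one_pos, hb⟩ hα₀ hα₁ hp hq hα
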